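/- There exist λ₀ > 0 and C > 0, independent of λ and η, such that for every η > 0, every λ ∈ ℂ with |λ| ≤ λ₀, and every smooth compactly supported ψ : ℝ^d → ℂ, one has ‖ψ‖_{H_η} ≤ C · sup { |a(ψ,φ)| : φ : ℝ^d → ℂ smooth compactly supported with ‖φ‖_{H_η} ≤ 1 }. -/

import Mathlib

open MeasureTheory Real

noncomputable section

/-- The sesquilinear form `a(ψ,φ)` of the paper:
`a(ψ,φ) = ∫ ∇(ψ/M)·∇(φ̄/M) M² + ∫ V ψ φ̄ + iη ∫ v₁ ψ φ̄ − λη^{2/3} ∫ ψ φ̄`,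
with `V(v) = ⟨v⟩^{-σ}`. -/
def aForm {d : ℕ} (h0 : 0 < d) (M : EuclideanSpace ℝ (Fin d) → ℝ) (σ η : ℝ) (l : ℂ)
    (ψ φ : EuclideanSpace ℝ (Fin d) → ℂ) : ℂ :=
  (∫ v, (∑ i : Fin d,
      fderiv ℝ (fun w => ψ w / (M w : ℂ)) v (EuclideanSpace.single i (1 : ℝ)) *
        fderiv ℝ (fun w => starRingEnd ℂ (φ w) / (M w : ℂ)) v (EuclideanSpace.single i (1 : ℝ)))
      * ((M v : ℂ)) ^ 2)
  + (∫ v, ((Real.sqrt (1 + ‖v‖ ^ 2) ^ (-σ) : ℝ) : ℂ) * (ψ v * starRingEnd ℂ (φ v)))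
  + Complex.I * (η : ℂ) * (∫ v, ((v (⟨0, h0⟩ : Fin d) : ℝ) : ℂ) * (ψ v * starRingEnd ℂ (φ v)))
  - l * ((η ^ ((2 : ℝ) / 3) : ℝ) : ℂ) * ∫ v, ψ v * starRingEnd ℂ (φ v)

/-- The squared norm `‖ψ‖²_{H_η}`. -/
def HnormSq {d : ℕ} (h0 : 0 < d) (M : EuclideanSpace ℝ (Fin d) → ℝ) (η : ℝ)
    (ψ : EuclideanSpace ℝ (Fin d) → ℂ) : ℝ :=
  (∫ v, ‖fderiv ℝ (fun w => ψ w / (M w : ℂ)) v‖ ^ 2 * (M v) ^ 2)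
  + (∫ v, ‖ψ v‖ ^ 2 / (1 + ‖v‖ ^ 2))
  + η * ∫ v, |v (⟨0, h0⟩ : Fin d)| * ‖ψ v‖ ^ 2

/-!
For `u = η^{1/3} e₁` one has `η v₁ = ‖u‖² ⟪u, v⟫` and `η^{2/3} = ‖u‖²`, so that uniformity in `η`
becomes uniformity in the vector `u`, in a form which no longer refers to coordinates.

Testing with `ψ` and taking real parts controls the energy and the potential; a Hardy inequality,
with a weight comparable to `M²`, then controls the `⟨v⟩⁻²`-mass. Testing with `softSign ⟪u, v⟫ ψ`
and taking imaginary parts controls the transport term up to the mass at scale `‖u‖²`. That mass is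
itself controlled, by integration by parts along `u`: it can concentrate near the hyperplane
`⟪u, v⟫ = 0` only at the cost of energy. For small `λ` the term `λ ‖u‖² ∫ |ψ|²` is therefore
absorbed, as is the commutator of the soft sign with the gradient.
-/

section Scalar

theorem div_sq_le_div_add_rpow {a ε J σ : ℝ} (ha : 0 ≤ a) (hε : 0 < ε) (hσ : 0 ≤ σ)
    (hJ : 1 ≤ J) : a / J ^ 2 ≤ ε / J + a * (a / ε) ^ (σ / 2) * √J ^ (-σ) := by
  have hJ₀ : 0 < J := by linarith
  rcases le_total a (ε * J) with h | h
  · have hle : a / J ^ 2 ≤ ε / J := by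
      rw [div_le_div_iff₀ (by positivity) hJ₀]
      nlinarith
    exact hle.trans (le_add_of_nonneg_right (by positivity))
  · have hJa : J ≤ a / ε := (le_div_iff₀' hε).2 h
    have hone : 1 ≤ (a / ε) ^ (σ / 2) * √J ^ (-σ) := by
      rw [← rpow_div_two_eq_sqrt _ hJ₀.le, neg_div, rpow_neg hJ₀.le, ← div_eq_mul_inv,
        one_le_div (by positivity)]
      gcongr
    calc a / J ^ 2 ≤ a := div_le_self ha (one_le_pow₀ hJ)
      _ ≤ a * ((a / ε) ^ (σ / 2) * √J ^ (-σ)) := le_mul_of_one_le_right ha hone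
      _ ≤ ε / J + a * (a / ε) ^ (σ / 2) * √J ^ (-σ) := by
        rw [mul_assoc]
        exact le_add_of_nonneg_left (by positivity)

theorem two_mul_mul_le_sq_div_add_mul_sq {c : ℝ} (hc : 0 < c) (x y : ℝ) :
    2 * x * y ≤ x ^ 2 / c + c * y ^ 2 := by
  have h : x ^ 2 / c + c * y ^ 2 - 2 * x * y = (x - c * y) ^ 2 / c := by
    field_simp
    ring
  linarith [show 0 ≤ (x - c * y) ^ 2 / c by positivity]

end Scalar

section SoftSign

/-- A smooth approximation of the sign function, used to build the second test function. -/
def softSign (s : ℝ) : ℝ := s / √(1 + s ^ 2)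

theorem sqrt_one_add_sq_pos (s : ℝ) : 0 < √(1 + s ^ 2) := Real.sqrt_pos.2 (by positivity)

theorem one_le_sqrt_one_add_sq (s : ℝ) : 1 ≤ √(1 + s ^ 2) :=
  Real.one_le_sqrt.2 (by nlinarith [sq_nonneg s])

theorem contDiff_softSign {n : WithTop ℕ∞} : ContDiff ℝ n softSign :=
  contDiff_id.div ((contDiff_const.add (contDiff_id.pow 2)).sqrt fun s ↦ by positivity)
    fun s ↦ (sqrt_one_add_sq_pos s).ne'

theorem abs_softSign_le_one (s : ℝ) : |softSign s| ≤ 1 := by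
  rw [softSign, abs_div, abs_of_pos (sqrt_one_add_sq_pos s), div_le_one (sqrt_one_add_sq_pos s)]
  exact Real.abs_le_sqrt (by linarith)

theorem hasDerivAt_softSign (s : ℝ) : HasDerivAt softSign (√(1 + s ^ 2) ^ 3)⁻¹ s := by
  have hpos := sqrt_one_add_sq_pos s
  have hsq : √(1 + s ^ 2) ^ 2 = 1 + s ^ 2 := Real.sq_sqrt (by positivity)
  have hsqrt : HasDerivAt (fun x : ℝ ↦ √(1 + x ^ 2)) (s / √(1 + s ^ 2)) s := by
    convert ((hasDerivAt_pow 2 s).const_add 1).sqrt (by positivity) using 1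
    field_simp
    norm_num [mul_comm]
  refine ((hasDerivAt_id' s).fun_div hsqrt hpos.ne').congr_deriv ?_
  field_simp
  linarith

theorem abs_deriv_softSign_le_one (s : ℝ) : |deriv softSign s| ≤ 1 := by
  rw [(hasDerivAt_softSign s).deriv, abs_of_pos (by have := sqrt_one_add_sq_pos s; positivity)]
  exact inv_le_one_of_one_le₀ (one_le_pow₀ (one_le_sqrt_one_add_sq s))

theorem mul_softSign_nonneg (s : ℝ) : 0 ≤ s * softSign s := by
  rw [softSign, ← mul_div_assoc, ← sq]
  positivity

theorem sq_div_one_add_sq_le_mul_softSign (s : ℝ) : s ^ 2 / (1 + s ^ 2) ≤ s * softSign s := by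
  rw [softSign, ← mul_div_assoc, ← sq]
  gcongr
  exact Real.sqrt_le_iff.2 ⟨by positivity, by nlinarith [sq_nonneg s, sq_nonneg (s ^ 2)]⟩

theorem abs_le_one_add_mul_softSign (s : ℝ) : |s| ≤ 1 + s * softSign s := by
  have hsq : √(1 + s ^ 2) ^ 2 = 1 + s ^ 2 := Real.sq_sqrt (by positivity)
  have habs : |s| ≤ √(1 + s ^ 2) := Real.abs_le_sqrt (by linarith)
  have hdiff : √(1 + s ^ 2) - s * softSign s = 1 / √(1 + s ^ 2) := by
    rw [softSign]
    field_simp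
    linarith
  linarith [div_le_self zero_le_one (one_le_sqrt_one_add_sq s)]

theorem hasDerivAt_div_one_add_sq (s : ℝ) :
    HasDerivAt (fun x : ℝ ↦ x / (1 + x ^ 2)) ((1 - s ^ 2) / (1 + s ^ 2) ^ 2) s := by
  have hden : HasDerivAt (fun x : ℝ ↦ 1 + x ^ 2) (2 * s) s := by
    simpa using (hasDerivAt_pow 2 s).const_add 1
  refine ((hasDerivAt_id' s).fun_div hden (by positivity)).congr_deriv ?_
  ring

theorem one_le_deriv_add_mul_softSign (s : ℝ) :
    1 ≤ (1 - s ^ 2) / (1 + s ^ 2) ^ 2 + 3 * (s * softSign s) := by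
  have h : 1 - (1 - s ^ 2) / (1 + s ^ 2) ^ 2 ≤ 3 * (s ^ 2 / (1 + s ^ 2)) := by
    rw [← sub_nonneg]
    have : 3 * (s ^ 2 / (1 + s ^ 2)) - (1 - (1 - s ^ 2) / (1 + s ^ 2) ^ 2) =
        2 * s ^ 4 / (1 + s ^ 2) ^ 2 := by
      field_simp
      ring
    rw [this]
    positivity
  linarith [sq_div_one_add_sq_le_mul_softSign s]

end SoftSign

section Calculus

theorem continuous_sqrt_one_add_norm_sq_rpow {E : Type*} [NormedAddCommGroup E] (p : ℝ) :
    Continuous fun v : E ↦ √(1 + ‖v‖ ^ 2) ^ p :=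
  Continuous.rpow_const (by fun_prop) fun v ↦ Or.inl (by positivity)

theorem continuous_inv_one_add_norm_sq {E : Type*} [NormedAddCommGroup E] :
    Continuous fun v : E ↦ (1 + ‖v‖ ^ 2)⁻¹ :=
  Continuous.inv₀ (by fun_prop) fun v ↦ by positivity

variable {E F : Type*} [NormedAddCommGroup E] [InnerProductSpace ℝ E]
  [NormedAddCommGroup F] [InnerProductSpace ℝ F]

theorem contDiff_softSign_inner (u : E) {n : WithTop ℕ∞} :
    ContDiff ℝ n fun v : E ↦ softSign (inner ℝ u v) :=
  contDiff_softSign.comp (contDiff_const.inner ℝ contDiff_id)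

theorem continuous_inner_mul_softSign (u : E) :
    Continuous fun v : E ↦ inner ℝ u v * softSign (inner ℝ u v) :=
  (continuous_const.inner continuous_id).mul (contDiff_softSign_inner (n := 0) u).continuous

theorem contDiff_one_add_norm_sq_rpow (p : ℝ) {n : WithTop ℕ∞} :
    ContDiff ℝ n fun v : E ↦ (1 + ‖v‖ ^ 2) ^ p :=
  (contDiff_const.add (contDiff_norm_sq ℝ)).rpow_const_of_ne fun v ↦ by positivity

theorem hasFDerivAt_one_add_norm_sq_rpow (p : ℝ) (v : E) :
    HasFDerivAt (fun v : E ↦ (1 + ‖v‖ ^ 2) ^ p)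
      ((p * (1 + ‖v‖ ^ 2) ^ (p - 1)) • (2 • innerSL ℝ v)) v := by
  simpa using (((hasFDerivAt_id v).norm_sq).const_add 1).rpow_const (p := p)
    (Or.inl (by positivity))

theorem abs_fderiv_norm_sq_apply_le {g : E → F} (hg : Differentiable ℝ g) (v e : E) :
    |fderiv ℝ (fun v ↦ ‖g v‖ ^ 2) v e| ≤ 2 * ‖g v‖ * (‖fderiv ℝ g v‖ * ‖e‖) := by
  rw [(hg v).hasFDerivAt.norm_sq.fderiv]
  calc |(2 • (innerSL ℝ (g v)).comp (fderiv ℝ g v)) e|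
      = 2 * |inner ℝ (g v) (fderiv ℝ g v e)| := by simp [abs_mul]
    _ ≤ 2 * (‖g v‖ * ‖fderiv ℝ g v e‖) := by gcongr; exact abs_real_inner_le_norm _ _
    _ ≤ 2 * (‖g v‖ * (‖fderiv ℝ g v‖ * ‖e‖)) := by gcongr; exact (fderiv ℝ g v).le_opNorm e
    _ = 2 * ‖g v‖ * (‖fderiv ℝ g v‖ * ‖e‖) := by ring

end Calculus

section Divergence

theorem integral_le_integral_of_le_add_mul {α : Type*} [MeasurableSpace α] {μ : Measure α}
    {f h D : α → ℝ} (hf : Integrable f μ) (hh : Integrable h μ) (hD : Integrable D μ)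
    (hD₀ : ∫ v, D v ∂μ = 0) (c : ℝ) (hle : ∀ v, f v ≤ h v + c * D v) :
    ∫ v, f v ∂μ ≤ ∫ v, h v ∂μ := by
  calc ∫ v, f v ∂μ ≤ ∫ v, (h v + c * D v) ∂μ := integral_mono hf (hh.add (hD.const_mul c)) hle
    _ = ∫ v, h v ∂μ := by
      rw [integral_add hh (hD.const_mul c), integral_const_mul, hD₀, mul_zero, add_zero]

variable {E F : Type*} [NormedAddCommGroup E] [InnerProductSpace ℝ E] [FiniteDimensional ℝ E]
  [MeasurableSpace E] [BorelSpace E] [NormedAddCommGroup F]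

theorem integrable_fderiv_apply [NormedSpace ℝ F] {f : E → F} (hf : ContDiff ℝ 1 f)
    (hc : HasCompactSupport f) (e : E) : Integrable fun v ↦ fderiv ℝ f v e :=
  ((hf.continuous_fderiv one_ne_zero).clm_apply continuous_const).integrable_of_hasCompactSupport
    (hc.fderiv_apply ℝ e)

theorem integral_fderiv_apply_eq_zero {f : E → ℝ} (hf : ContDiff ℝ 1 f)
    (hc : HasCompactSupport f) (e : E) : ∫ v, fderiv ℝ f v e = 0 := by
  simpa using integral_mul_fderiv_eq_neg_fderiv_mul_of_integrable (𝕜 := ℝ) (μ := volume)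
    (f := fun _ ↦ (1 : ℝ)) (g := f) (v := e) (by simp)
    (by simpa using integrable_fderiv_apply hf hc e)
    (by simpa using hf.continuous.integrable_of_hasCompactSupport hc)
    (fun _ _ ↦ differentiableAt_const _) (fun v _ ↦ hf.differentiable one_ne_zero v)

theorem integrable_finrank_mul_add_fderiv_apply_self {f : E → ℝ} (hf : ContDiff ℝ 1 f)
    (hc : HasCompactSupport f) :
    Integrable fun v ↦ Module.finrank ℝ E * f v + fderiv ℝ f v v := by
  refine ((continuous_const.mul hf.continuous).add ((hf.continuous_fderiv one_ne_zero).clm_apply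
    continuous_id)).integrable_of_hasCompactSupport (hc.mul_left.add ?_)
  exact (hc.fderiv ℝ).mono' fun v hv ↦ subset_tsupport _ fun h ↦ hv (by simp [h])

-- The integrand is the divergence of the vector field `v ↦ f v • v`.
theorem integral_finrank_mul_add_fderiv_apply_self_eq_zero {f : E → ℝ} (hf : ContDiff ℝ 1 f)
    (hc : HasCompactSupport f) : ∫ v, (Module.finrank ℝ E * f v + fderiv ℝ f v v) = 0 := by
  let b := stdOrthonormalBasis ℝ E
  have hcoord (i) : ContDiff ℝ 1 fun v ↦ inner ℝ (b i) v * f v :=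
    ((innerSL ℝ (b i)).contDiff).mul hf
  have hcoordc (i) : HasCompactSupport fun v ↦ inner ℝ (b i) v * f v := hc.mul_left
  have hderiv (i) (v : E) : fderiv ℝ (fun v ↦ inner ℝ (b i) v * f v) v (b i) =
      f v + fderiv ℝ f v (inner ℝ (b i) v • b i) := by
    have h := ((innerSL ℝ (b i)).hasFDerivAt (x := v)).mul
      (hf.differentiable one_ne_zero v).hasFDerivAt
    rw [show fderiv ℝ (fun v ↦ inner ℝ (b i) v * f v) v = _ from h.fderiv]
    simp [add_comm]
  have hdiv (v : E) : Module.finrank ℝ E * f v + fderiv ℝ f v v =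
      ∑ i, fderiv ℝ (fun v ↦ inner ℝ (b i) v * f v) v (b i) := by
    simp_rw [hderiv, Finset.sum_add_distrib, ← map_sum, b.sum_repr']
    simp
  simp_rw [hdiv]
  rw [integral_finsetSum _ fun i _ ↦ integrable_fderiv_apply (hcoord i) (hcoordc i) _]
  exact Finset.sum_eq_zero fun i _ ↦ integral_fderiv_apply_eq_zero (hcoord i) (hcoordc i) _

theorem integrable_mul_norm_sq {k : E → ℝ} {g : E → F} (hk : Continuous k)
    (hg : Continuous g) (hc : HasCompactSupport g) : Integrable fun v ↦ k v * ‖g v‖ ^ 2 := by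
  have hcn : HasCompactSupport fun v ↦ ‖g v‖ ^ 2 :=
    hc.comp_left (g := fun x : F ↦ ‖x‖ ^ 2) (by simp)
  exact (hk.mul (hg.norm.pow 2)).integrable_of_hasCompactSupport hcn.mul_left

end Divergence

section WeightedInequalities

variable {E F : Type*} [NormedAddCommGroup E] [InnerProductSpace ℝ E] [FiniteDimensional ℝ E]
  [MeasurableSpace E] [BorelSpace E] [NormedAddCommGroup F] [InnerProductSpace ℝ F]

theorem integrable_mul_norm_fderiv_sq_add {w k : E → ℝ} {g : E → F} (hw : Continuous w)
    (hk : Continuous k) (hg : ContDiff ℝ 1 g) (hc : HasCompactSupport g) :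
    Integrable fun v ↦ w v * (‖fderiv ℝ g v‖ ^ 2 + k v * ‖g v‖ ^ 2) := by
  have hD := integrable_mul_norm_sq hw (hg.continuous_fderiv one_ne_zero) (hc.fderiv ℝ)
  refine (hD.add (integrable_mul_norm_sq (hw.mul hk) hg.continuous hc)).congr (.of_forall ?_)
  intro v
  simp only [Pi.add_apply, Pi.mul_apply]
  ring

omit [FiniteDimensional ℝ E] [MeasurableSpace E] [BorelSpace E] in
theorem fderiv_one_add_norm_sq_rpow_mul_norm_sq_apply (p : ℝ) {g : E → F}
    (hg : Differentiable ℝ g) (v e : E) :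
    fderiv ℝ (fun v ↦ (1 + ‖v‖ ^ 2) ^ p * ‖g v‖ ^ 2) v e =
      (1 + ‖v‖ ^ 2) ^ p * (2 * p * (inner ℝ v e * ((1 + ‖v‖ ^ 2)⁻¹ * ‖g v‖ ^ 2)) +
        fderiv ℝ (fun v ↦ ‖g v‖ ^ 2) v e) := by
  have h := (hasFDerivAt_one_add_norm_sq_rpow p v).mul
    ((hg v).norm_sq ℝ).hasFDerivAt
  rw [show fderiv ℝ (fun v ↦ (1 + ‖v‖ ^ 2) ^ p * ‖g v‖ ^ 2) v = _ from h.fderiv,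
    rpow_sub_one (by positivity)]
  simp
  ring

omit [FiniteDimensional ℝ E] [MeasurableSpace E] [BorelSpace E] in
theorem finrank_mul_add_fderiv_apply_self_rpow_mul_norm_sq (γ : ℝ) {g : E → F}
    (hg : Differentiable ℝ g) (v : E) :
    Module.finrank ℝ E * ((1 + ‖v‖ ^ 2) ^ (-γ - 1) * ‖g v‖ ^ 2) +
        fderiv ℝ (fun v ↦ (1 + ‖v‖ ^ 2) ^ (-γ - 1) * ‖g v‖ ^ 2) v v =
      (1 + ‖v‖ ^ 2) ^ (-γ) *
        ((Module.finrank ℝ E - 2 * (γ + 1)) * ((1 + ‖v‖ ^ 2)⁻¹ * ‖g v‖ ^ 2) +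
          2 * (γ + 1) * (‖g v‖ ^ 2 / (1 + ‖v‖ ^ 2) ^ 2) +
          (1 + ‖v‖ ^ 2)⁻¹ * fderiv ℝ (fun v ↦ ‖g v‖ ^ 2) v v) := by
  rw [fderiv_one_add_norm_sq_rpow_mul_norm_sq_apply _ hg, real_inner_self_eq_norm_sq,
    rpow_sub_one (by positivity)]
  field_simp
  ring

theorem hardy_pointwise {c J n σ x y z κ : ℝ} (hκ : κ ≠ 0) (hσ : 0 ≤ σ) (hJ : 1 ≤ J)
    (hn : n ^ 2 ≤ J) (hz : |z| ≤ 2 * x * (y * n)) :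
    κ ^ 2 / 2 * (J⁻¹ * x ^ 2) ≤
      (4 + |κ * c| * (|κ * c| / (κ ^ 2 / 4)) ^ (σ / 2)) * (y ^ 2 + √J ^ (-σ) * x ^ 2) +
        κ * (κ * (J⁻¹ * x ^ 2) + c * (x ^ 2 / J ^ 2) + J⁻¹ * z) := by
  have hJ₀ : 0 < J := by linarith
  set C := |κ * c| * (|κ * c| / (κ ^ 2 / 4)) ^ (σ / 2)
  have hinterp : -(κ * (c * (x ^ 2 / J ^ 2))) ≤
      κ ^ 2 / 4 * (J⁻¹ * x ^ 2) + C * (√J ^ (-σ) * x ^ 2) := by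
    calc -(κ * (c * (x ^ 2 / J ^ 2))) = -(κ * c) * (x ^ 2 / J ^ 2) := by ring
      _ ≤ |κ * c| * (x ^ 2 / J ^ 2) := by gcongr; exact neg_le_abs _
      _ = |κ * c| / J ^ 2 * x ^ 2 := by ring
      _ ≤ ((κ ^ 2 / 4) / J + C * √J ^ (-σ)) * x ^ 2 := by
        gcongr
        exact div_sq_le_div_add_rpow (abs_nonneg _) (by positivity) hσ hJ
      _ = κ ^ 2 / 4 * (J⁻¹ * x ^ 2) + C * (√J ^ (-σ) * x ^ 2) := by ring
  have hcross : -(κ * (J⁻¹ * z)) ≤ κ ^ 2 / 4 * (J⁻¹ * x ^ 2) + 4 * y ^ 2 := by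
    calc -(κ * (J⁻¹ * z)) ≤ |κ| * (J⁻¹ * |z|) := by
          rw [← abs_of_pos (inv_pos.2 hJ₀), ← abs_mul, ← abs_mul, abs_of_pos (inv_pos.2 hJ₀)]
          exact neg_le_abs _
      _ ≤ |κ| * (J⁻¹ * (2 * x * (y * n))) := by gcongr
      _ = J⁻¹ * (2 * (|κ| * x) * (n * y)) := by ring
      _ ≤ J⁻¹ * ((|κ| * x) ^ 2 / 4 + 4 * (n * y) ^ 2) := by
        gcongr
        exact two_mul_mul_le_sq_div_add_mul_sq four_pos _ _
      _ = κ ^ 2 / 4 * (J⁻¹ * x ^ 2) + 4 * (n ^ 2 / J * y ^ 2) := by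
        rw [mul_pow, sq_abs]; ring
      _ ≤ κ ^ 2 / 4 * (J⁻¹ * x ^ 2) + 4 * (1 * y ^ 2) := by
        gcongr
        exact (div_le_one hJ₀).2 hn
      _ = κ ^ 2 / 4 * (J⁻¹ * x ^ 2) + 4 * y ^ 2 := by ring
  have hCy : 0 ≤ C * y ^ 2 := by positivity
  have hVx : 0 ≤ √J ^ (-σ) * x ^ 2 := by positivity
  linarith

-- Expand the integral of the divergence of `v ↦ (1 + ‖v‖²) ^ (-γ - 1) ‖g v‖² v`; the bracket
-- `κ (1 + ‖v‖²)⁻¹ ‖g v‖²` it produces is nondegenerate as soon as `κ = dim E - 2 (γ + 1) ≠ 0`.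
theorem exists_hardy_inequality {γ σ : ℝ} (hγ : 2 * (γ + 1) ≠ Module.finrank ℝ E)
    (hσ : 0 ≤ σ) :
    ∃ K : ℝ, 0 < K ∧ ∀ g : E → F, ContDiff ℝ 1 g → HasCompactSupport g →
      ∫ v, (1 + ‖v‖ ^ 2) ^ (-γ) * ((1 + ‖v‖ ^ 2)⁻¹ * ‖g v‖ ^ 2) ≤
        K * ∫ v, (1 + ‖v‖ ^ 2) ^ (-γ) *
          (‖fderiv ℝ g v‖ ^ 2 + √(1 + ‖v‖ ^ 2) ^ (-σ) * ‖g v‖ ^ 2) := by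
  set κ : ℝ := Module.finrank ℝ E - 2 * (γ + 1)
  have hκ : κ ≠ 0 := sub_ne_zero.2 hγ.symm
  set C := |κ * (2 * (γ + 1))| * (|κ * (2 * (γ + 1))| / (κ ^ 2 / 4)) ^ (σ / 2)
  refine ⟨(4 + C) / (κ ^ 2 / 2), by positivity, fun g hg hc ↦ ?_⟩
  let f (v : E) : ℝ := (1 + ‖v‖ ^ 2) ^ (-γ - 1) * ‖g v‖ ^ 2
  have hf : ContDiff ℝ 1 f := (contDiff_one_add_norm_sq_rpow _).mul (hg.norm_sq ℝ)
  have hfc : HasCompactSupport f :=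
    (hc.comp_left (g := fun x : F ↦ ‖x‖ ^ 2) (by simp)).mul_left
  have hw : Continuous fun v : E ↦ (1 + ‖v‖ ^ 2) ^ (-γ) :=
    (contDiff_one_add_norm_sq_rpow (n := 0) _).continuous
  have hmass : Integrable fun v ↦ (1 + ‖v‖ ^ 2) ^ (-γ) * ((1 + ‖v‖ ^ 2)⁻¹ * ‖g v‖ ^ 2) := by
    simpa only [Pi.mul_apply, mul_assoc] using
      integrable_mul_norm_sq (hw.mul continuous_inv_one_add_norm_sq) hg.continuous hc
  have henergy := integrable_mul_norm_fderiv_sq_add hw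
    (continuous_sqrt_one_add_norm_sq_rpow (-σ)) hg hc
  rw [div_mul_eq_mul_div, le_div_iff₀' (by positivity), ← integral_const_mul,
    ← integral_const_mul]
  refine integral_le_integral_of_le_add_mul (hmass.const_mul _) (henergy.const_mul _)
    (integrable_finrank_mul_add_fderiv_apply_self hf hfc)
    (integral_finrank_mul_add_fderiv_apply_self_eq_zero hf hfc) κ fun v ↦ ?_
  simp only [f]
  rw [finrank_mul_add_fderiv_apply_self_rpow_mul_norm_sq γ (hg.differentiable one_ne_zero)]
  have hpt := hardy_pointwise (c := 2 * (γ + 1)) hκ hσ (by simp : 1 ≤ 1 + ‖v‖ ^ 2)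
    (by simp : ‖v‖ ^ 2 ≤ 1 + ‖v‖ ^ 2)
    (abs_fderiv_norm_sq_apply_le (hg.differentiable one_ne_zero) v v)
  have hwpos : 0 ≤ (1 + ‖v‖ ^ 2) ^ (-γ) := by positivity
  refine Eq.trans_le ?_ ((mul_le_mul_of_nonneg_left hpt hwpos).trans_eq ?_) <;> ring

omit [FiniteDimensional ℝ E] [MeasurableSpace E] [BorelSpace E] in
theorem fderiv_div_one_add_inner_sq_mul_apply (u : E) {f : E → ℝ} (hf : Differentiable ℝ f)
    (v : E) :
    fderiv ℝ (fun v ↦ inner ℝ u v / (1 + inner ℝ u v ^ 2) * f v) v u =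
      (1 - inner ℝ u v ^ 2) / (1 + inner ℝ u v ^ 2) ^ 2 * (‖u‖ ^ 2 * f v) +
        inner ℝ u v / (1 + inner ℝ u v ^ 2) * fderiv ℝ f v u := by
  have hs := (hasDerivAt_div_one_add_sq (inner ℝ u v)).comp_hasFDerivAt v
    (innerSL ℝ u).hasFDerivAt
  have h := hs.mul (hf v).hasFDerivAt
  rw [show fderiv ℝ (fun v ↦ inner ℝ u v / (1 + inner ℝ u v ^ 2) * f v) v = _ from h.fderiv]
  simp
  ring

theorem abs_div_one_add_sq_le_half (s : ℝ) : |s / (1 + s ^ 2)| ≤ 1 / 2 := by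
  rw [abs_div, abs_of_pos (show 0 < 1 + s ^ 2 by positivity), div_le_div_iff₀ (by positivity)
    two_pos, ← sq_abs s]
  nlinarith [sq_nonneg (|s| - 1)]

theorem localization_pointwise {J m s x y z γ : ℝ} (hJ : 0 < J)
    (hz : |z| ≤ 2 * x * (y * m)) :
    m ^ 2 * x ^ 2 ≤
      (6 + 4 * |γ|) * (y ^ 2 + (J⁻¹ + m ^ 2 * (s * softSign s)) * x ^ 2) +
        2 * ((1 - s ^ 2) / (1 + s ^ 2) ^ 2 * (m ^ 2 * x ^ 2) +
          s / (1 + s ^ 2) * (2 * -γ * (s * (J⁻¹ * x ^ 2)) + z)) := by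
  have hlocal : m ^ 2 * x ^ 2 ≤ (1 - s ^ 2) / (1 + s ^ 2) ^ 2 * (m ^ 2 * x ^ 2) +
      3 * (m ^ 2 * (s * softSign s) * x ^ 2) := by
    nlinarith [mul_le_mul_of_nonneg_right (one_le_deriv_add_mul_softSign s)
      (show 0 ≤ m ^ 2 * x ^ 2 by positivity)]
  have hweight : γ * (s ^ 2 / (1 + s ^ 2)) * (J⁻¹ * x ^ 2) ≤ |γ| * (J⁻¹ * x ^ 2) := by
    have hfrac : s ^ 2 / (1 + s ^ 2) ≤ 1 := (div_le_one (by positivity)).2 (by linarith)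
    gcongr
    calc γ * (s ^ 2 / (1 + s ^ 2)) ≤ |γ| * (s ^ 2 / (1 + s ^ 2)) := by
          gcongr; exact le_abs_self γ
      _ ≤ |γ| := mul_le_of_le_one_right (abs_nonneg γ) hfrac
  have hcross : -(s / (1 + s ^ 2) * z) ≤ m ^ 2 * x ^ 2 / 2 + y ^ 2 / 2 := by
    calc -(s / (1 + s ^ 2) * z) ≤ |s / (1 + s ^ 2)| * |z| := by
          rw [← abs_mul]; exact neg_le_abs _
      _ ≤ 1 / 2 * (2 * x * (y * m)) := by
        gcongr
        exact abs_div_one_add_sq_le_half s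
      _ ≤ m ^ 2 * x ^ 2 / 2 + y ^ 2 / 2 := by nlinarith [sq_nonneg (m * x - y)]
  have hB : 0 ≤ m ^ 2 * (s * softSign s) * x ^ 2 := by
    have := mul_softSign_nonneg s
    positivity
  have hH : 0 ≤ J⁻¹ * x ^ 2 := by positivity
  have hγ : 0 ≤ |γ| * (y ^ 2 + m ^ 2 * (s * softSign s) * x ^ 2) := by positivity
  have hs : s / (1 + s ^ 2) * (2 * -γ * (s * (J⁻¹ * x ^ 2)) + z) =
      -(2 * (γ * (s ^ 2 / (1 + s ^ 2)) * (J⁻¹ * x ^ 2))) + s / (1 + s ^ 2) * z := by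
    ring
  rw [hs]
  linarith [sq_nonneg y]

-- Integrate the derivative along `u` of `s / (1 + s²) (1 + ‖v‖²) ^ (-γ) ‖g v‖²`, `s = ⟪u, v⟫`,
-- which is `‖u‖² (1 + ‖v‖²) ^ (-γ) ‖g v‖²` to leading order near the hyperplane `s = 0`.
theorem norm_sq_mul_integral_le_localized (γ : ℝ) (u : E) {g : E → F} (hg : ContDiff ℝ 1 g)
    (hc : HasCompactSupport g) :
    ∫ v, (1 + ‖v‖ ^ 2) ^ (-γ) * (‖u‖ ^ 2 * ‖g v‖ ^ 2) ≤
      (6 + 4 * |γ|) * ∫ v, (1 + ‖v‖ ^ 2) ^ (-γ) * (‖fderiv ℝ g v‖ ^ 2 +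
        ((1 + ‖v‖ ^ 2)⁻¹ + ‖u‖ ^ 2 * (inner ℝ u v * softSign (inner ℝ u v))) * ‖g v‖ ^ 2) := by
  let f (v : E) : ℝ :=
    inner ℝ u v / (1 + inner ℝ u v ^ 2) * ((1 + ‖v‖ ^ 2) ^ (-γ) * ‖g v‖ ^ 2)
  have hinner : ContDiff ℝ 1 fun v : E ↦ inner ℝ u v := contDiff_const.inner ℝ contDiff_id
  have hwg : ContDiff ℝ 1 fun v ↦ (1 + ‖v‖ ^ 2) ^ (-γ) * ‖g v‖ ^ 2 :=
    (contDiff_one_add_norm_sq_rpow _).mul (hg.norm_sq ℝ)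
  have hf : ContDiff ℝ 1 f :=
    (hinner.div (contDiff_const.add (hinner.pow 2)) fun v ↦ by positivity).mul hwg
  have hfc : HasCompactSupport f :=
    (hc.comp_left (g := fun x : F ↦ ‖x‖ ^ 2) (by simp)).mul_left.mul_left
  have hw : Continuous fun v : E ↦ (1 + ‖v‖ ^ 2) ^ (-γ) :=
    (contDiff_one_add_norm_sq_rpow (n := 0) _).continuous
  have hmass : Integrable fun v ↦ (1 + ‖v‖ ^ 2) ^ (-γ) * (‖u‖ ^ 2 * ‖g v‖ ^ 2) := by
    simpa only [Pi.mul_apply, mul_assoc] using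
      integrable_mul_norm_sq (hw.mul (continuous_const (y := ‖u‖ ^ 2))) hg.continuous hc
  have henergy := integrable_mul_norm_fderiv_sq_add hw (continuous_inv_one_add_norm_sq.add
    ((continuous_inner_mul_softSign u).const_mul (‖u‖ ^ 2))) hg hc
  rw [← integral_const_mul]
  refine integral_le_integral_of_le_add_mul hmass (henergy.const_mul _)
    (integrable_fderiv_apply hf hfc u) (integral_fderiv_apply_eq_zero hf hfc u) 2 fun v ↦ ?_
  simp only [f]
  rw [fderiv_div_one_add_inner_sq_mul_apply u (hwg.differentiable one_ne_zero),
    fderiv_one_add_norm_sq_rpow_mul_norm_sq_apply _ (hg.differentiable one_ne_zero),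
    real_inner_comm u v]
  have hpt := localization_pointwise (γ := γ) (s := inner ℝ u v)
    (zero_lt_one_add_norm_sq v) (abs_fderiv_norm_sq_apply_le (hg.differentiable one_ne_zero) v u)
  have hwpos : 0 ≤ (1 + ‖v‖ ^ 2) ^ (-γ) := by positivity
  refine Eq.trans_le ?_ ((mul_le_mul_of_nonneg_left hpt hwpos).trans_eq ?_) <;> ring

end WeightedInequalities

section MassAndEnergy

variable {E : Type*} [NormedAddCommGroup E] [InnerProductSpace ℝ E] [FiniteDimensional ℝ E]
  [MeasurableSpace E] [BorelSpace E] {M k k₁ k₂ : E → ℝ} {ψ φ : E → ℂ}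

/-- The weighted mass `∫ k |ψ|²`; it covers the potential, the `⟨v⟩⁻²`-mass and the transport
part of the norm according to the choice of `k`. -/
def weightedMass (k : E → ℝ) (ψ : E → ℂ) : ℝ := ∫ v, k v * ‖ψ v‖ ^ 2

/-- The energy `∫ |∇(ψ/M)|² M²`, with the operator norm of the real derivative as `|∇(ψ/M)|`. -/
def dirichletEnergy (M : E → ℝ) (ψ : E → ℂ) : ℝ :=
  ∫ v, ‖fderiv ℝ (fun w ↦ ψ w / (M w : ℂ)) v‖ ^ 2 * M v ^ 2

theorem weightedMass_nonneg (hk : ∀ v, 0 ≤ k v) : 0 ≤ weightedMass k ψ :=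
  integral_nonneg fun v ↦ mul_nonneg (hk v) (sq_nonneg _)

theorem dirichletEnergy_nonneg : 0 ≤ dirichletEnergy M ψ :=
  integral_nonneg fun v ↦ by positivity

theorem weightedMass_const_mul (c : ℝ) :
    weightedMass (fun v ↦ c * k v) ψ = c * weightedMass k ψ := by
  simp only [weightedMass, mul_assoc, integral_const_mul]

theorem weightedMass_mono (hk₁ : Continuous k₁) (hk₂ : Continuous k₂) (hψ : Continuous ψ)
    (hc : HasCompactSupport ψ) (h : ∀ v, k₁ v ≤ k₂ v) :
    weightedMass k₁ ψ ≤ weightedMass k₂ ψ :=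
  integral_mono (integrable_mul_norm_sq hk₁ hψ hc) (integrable_mul_norm_sq hk₂ hψ hc)
    fun v ↦ mul_le_mul_of_nonneg_right (h v) (sq_nonneg _)

theorem weightedMass_add (hk₁ : Continuous k₁) (hk₂ : Continuous k₂) (hψ : Continuous ψ)
    (hc : HasCompactSupport ψ) :
    weightedMass (fun v ↦ k₁ v + k₂ v) ψ = weightedMass k₁ ψ + weightedMass k₂ ψ := by
  simp only [weightedMass, add_mul]
  exact integral_add (integrable_mul_norm_sq hk₁ hψ hc) (integrable_mul_norm_sq hk₂ hψ hc)

theorem weightedMass_le_of_norm_le (hk : Continuous k) (hk₀ : ∀ v, 0 ≤ k v)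
    (hψ : Continuous ψ) (hc : HasCompactSupport ψ) (h : ∀ v, ‖φ v‖ ≤ ‖ψ v‖) :
    weightedMass k φ ≤ weightedMass k ψ :=
  integral_mono_of_nonneg (.of_forall fun v ↦ mul_nonneg (hk₀ v) (sq_nonneg _))
    (integrable_mul_norm_sq hk hψ hc) (.of_forall fun v ↦
      mul_le_mul_of_nonneg_left (pow_le_pow_left₀ (norm_nonneg _) (h v) 2) (hk₀ v))

omit [FiniteDimensional ℝ E] [MeasurableSpace E] [BorelSpace E] in
theorem contDiff_div_ofReal (hM : ContDiff ℝ 1 M) (hM₀ : ∀ v, M v ≠ 0) (hψ : ContDiff ℝ 1 ψ) :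
    ContDiff ℝ 1 fun v ↦ ψ v / (M v : ℂ) := by
  have h : (fun v ↦ ψ v / (M v : ℂ)) = fun v ↦ (M v)⁻¹ • ψ v := by
    ext v
    rw [Complex.real_smul, Complex.ofReal_inv, div_eq_inv_mul]
  exact h ▸ (hM.inv hM₀).smul hψ

omit [FiniteDimensional ℝ E] [InnerProductSpace ℝ E] [MeasurableSpace E] [BorelSpace E] in
theorem hasCompactSupport_div_ofReal (hc : HasCompactSupport ψ) :
    HasCompactSupport fun v ↦ ψ v / (M v : ℂ) :=
  hc.mono fun v hv h ↦ hv (by simp [h])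

omit [FiniteDimensional ℝ E] [MeasurableSpace E] [BorelSpace E] in
theorem fderiv_smul_div_ofReal (c : ℝ) (v : E) :
    fderiv ℝ (fun w ↦ (c • ψ) w / (M w : ℂ)) v = c • fderiv ℝ (fun w ↦ ψ w / (M w : ℂ)) v := by
  simp only [Pi.smul_apply, smul_div_assoc]
  exact congrFun (fderiv_const_smul_field (𝕜 := ℝ) (f := fun w ↦ ψ w / (M w : ℂ)) c) v

theorem weightedMass_smul (c : ℝ) : weightedMass k (c • ψ) = c ^ 2 * weightedMass k ψ := by
  simp only [weightedMass, Pi.smul_apply, norm_smul, norm_eq_abs, mul_pow, sq_abs,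
    mul_left_comm _ (c ^ 2), integral_const_mul]

theorem dirichletEnergy_smul (c : ℝ) : dirichletEnergy M (c • ψ) = c ^ 2 * dirichletEnergy M ψ := by
  simp only [dirichletEnergy, fderiv_smul_div_ofReal, norm_smul, norm_eq_abs, mul_pow, sq_abs,
    mul_assoc, integral_const_mul]

theorem norm_sq_eq_sq_mul_norm_div_sq {α : Type*} {M : α → ℝ} {ψ : α → ℂ}
    (hM₀ : ∀ v, M v ≠ 0) (v : α) : ‖ψ v‖ ^ 2 = M v ^ 2 * ‖ψ v / (M v : ℂ)‖ ^ 2 := by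
  have := hM₀ v
  rw [norm_div, div_pow, Complex.norm_real, norm_eq_abs, sq_abs]
  field_simp

theorem integrable_dirichletEnergy (hM : ContDiff ℝ 1 M) (hM₀ : ∀ v, M v ≠ 0)
    (hψ : ContDiff ℝ 1 ψ) (hc : HasCompactSupport ψ) :
    Integrable fun v ↦ ‖fderiv ℝ (fun w ↦ ψ w / (M w : ℂ)) v‖ ^ 2 * M v ^ 2 := by
  simpa only [Pi.pow_apply, mul_comm] using integrable_mul_norm_sq (hM.continuous.pow 2)
    ((contDiff_div_ofReal hM hM₀ hψ).continuous_fderiv one_ne_zero)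
    ((hasCompactSupport_div_ofReal hc).fderiv ℝ)

theorem dirichletEnergy_add_weightedMass (hM : ContDiff ℝ 1 M) (hM₀ : ∀ v, M v ≠ 0)
    (hk : Continuous k) (hψ : ContDiff ℝ 1 ψ) (hc : HasCompactSupport ψ) :
    dirichletEnergy M ψ + weightedMass k ψ =
      ∫ v, M v ^ 2 * (‖fderiv ℝ (fun w ↦ ψ w / (M w : ℂ)) v‖ ^ 2 +
        k v * ‖ψ v / (M v : ℂ)‖ ^ 2) := by
  rw [dirichletEnergy, weightedMass, ← integral_add (integrable_dirichletEnergy hM hM₀ hψ hc)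
    (integrable_mul_norm_sq hk hψ.continuous hc)]
  refine integral_congr_ae (.of_forall fun v ↦ ?_)
  simp only [norm_sq_eq_sq_mul_norm_div_sq hM₀ v]
  ring

-- A weighted inequality for `ψ / M` becomes one for `ψ`, the weight `w` being comparable to `M²`.
theorem weightedMass_le_of_weighted_inequality {w : E → ℝ} {a b K : ℝ} (ha : 0 < a)
    (hb : 0 ≤ b) (hK : 0 ≤ K) (hM : ContDiff ℝ 1 M) (hM₀ : ∀ v, M v ≠ 0) (hw : Continuous w)
    (hlow : ∀ v, a * w v ≤ M v ^ 2) (hup : ∀ v, M v ^ 2 ≤ b * w v)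
    (hk₁ : Continuous k₁) (hk₁₀ : ∀ v, 0 ≤ k₁ v) (hk₂ : Continuous k₂) (hk₂₀ : ∀ v, 0 ≤ k₂ v)
    (h : ∀ g : E → ℂ, ContDiff ℝ 1 g → HasCompactSupport g →
      ∫ v, w v * (k₁ v * ‖g v‖ ^ 2) ≤ K * ∫ v, w v * (‖fderiv ℝ g v‖ ^ 2 + k₂ v * ‖g v‖ ^ 2))
    (hψ : ContDiff ℝ 1 ψ) (hc : HasCompactSupport ψ) :
    weightedMass k₁ ψ ≤ b * K / a * (dirichletEnergy M ψ + weightedMass k₂ ψ) := by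
  set g := fun v ↦ ψ v / (M v : ℂ)
  have hg : ContDiff ℝ 1 g := contDiff_div_ofReal hM hM₀ hψ
  have hgc : HasCompactSupport g := hasCompactSupport_div_ofReal hc
  have hmass : weightedMass k₁ ψ ≤ b * ∫ v, w v * (k₁ v * ‖g v‖ ^ 2) := by
    rw [weightedMass, ← integral_const_mul]
    refine integral_mono (integrable_mul_norm_sq hk₁ hψ.continuous hc) ?_ fun v ↦ ?_
    · simpa only [Pi.mul_apply, mul_assoc] using
        (integrable_mul_norm_sq (hw.mul hk₁) hg.continuous hgc).const_mul b
    · have := mul_le_mul_of_nonneg_right (hup v) (mul_nonneg (hk₁₀ v) (sq_nonneg ‖g v‖))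
      have hψg : ‖ψ v‖ ^ 2 = M v ^ 2 * ‖g v‖ ^ 2 := norm_sq_eq_sq_mul_norm_div_sq hM₀ v
      simp only [hψg]
      linarith
  have henergy : ∫ v, w v * (‖fderiv ℝ g v‖ ^ 2 + k₂ v * ‖g v‖ ^ 2) ≤
      1 / a * (dirichletEnergy M ψ + weightedMass k₂ ψ) := by
    rw [one_div_mul_eq_div, le_div_iff₀' ha, ← integral_const_mul,
      dirichletEnergy_add_weightedMass hM hM₀ hk₂ hψ hc]
    refine integral_mono ((integrable_mul_norm_fderiv_sq_add hw hk₂ hg hgc).const_mul a)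
      (integrable_mul_norm_fderiv_sq_add (hM.continuous.pow 2) hk₂ hg hgc) fun v ↦ ?_
    have := hk₂₀ v
    simp only [← mul_assoc]
    exact mul_le_mul_of_nonneg_right (hlow v) (by positivity)
  calc weightedMass k₁ ψ ≤ b * ∫ v, w v * (k₁ v * ‖g v‖ ^ 2) := hmass
    _ ≤ b * (K * (1 / a * (dirichletEnergy M ψ + weightedMass k₂ ψ))) := by
      gcongr
      exact (h g hg hgc).trans (by gcongr)
    _ = b * K / a * (dirichletEnergy M ψ + weightedMass k₂ ψ) := by ring

end MassAndEnergy

section GradInner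

variable {ι : Type*} [Fintype ι] [DecidableEq ι] {L L' : EuclideanSpace ℝ ι →L[ℝ] ℂ}

/-- The sesquilinear product `∑ᵢ Lᵢ conj(L'ᵢ)` of two gradients, written in coordinates for the
derivatives `L` and `L'`. -/
def gradInner (L L' : EuclideanSpace ℝ ι →L[ℝ] ℂ) : ℂ :=
  ∑ i, L (EuclideanSpace.single i 1) * starRingEnd ℂ (L' (EuclideanSpace.single i 1))

theorem sum_smul_single (u : EuclideanSpace ℝ ι) :
    ∑ i, u i • EuclideanSpace.single i (1 : ℝ) = u := by
  simpa using (EuclideanSpace.basisFun ι ℝ).sum_repr u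

theorem gradInner_self (L : EuclideanSpace ℝ ι →L[ℝ] ℂ) :
    gradInner L L = ((∑ i, ‖L (EuclideanSpace.single i 1)‖ ^ 2 : ℝ) : ℂ) := by
  simp [gradInner, Complex.mul_conj']

theorem norm_sq_le_re_gradInner_self (L : EuclideanSpace ℝ ι →L[ℝ] ℂ) :
    ‖L‖ ^ 2 ≤ (gradInner L L).re := by
  rw [gradInner_self, Complex.ofReal_re, ← le_sqrt (norm_nonneg _) (by positivity)]
  refine L.opNorm_le_bound (sqrt_nonneg _) fun x ↦ ?_
  calc ‖L x‖ = ‖∑ i, x i • L (EuclideanSpace.single i 1)‖ := by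
        conv_lhs => rw [← sum_smul_single x]
        simp only [map_sum, map_smul]
    _ ≤ ∑ i, ‖L (EuclideanSpace.single i 1)‖ * |x i| :=
      norm_sum_le_of_le _ fun i _ ↦ by rw [norm_smul, norm_eq_abs, mul_comm]
    _ ≤ √(∑ i, ‖L (EuclideanSpace.single i 1)‖ ^ 2) * √(∑ i, |x i| ^ 2) :=
      sum_mul_le_sqrt_mul_sqrt _ _ _
    _ = √(∑ i, ‖L (EuclideanSpace.single i 1)‖ ^ 2) * ‖x‖ := by
      rw [EuclideanSpace.norm_eq]; rfl

theorem norm_gradInner_le (L L' : EuclideanSpace ℝ ι →L[ℝ] ℂ) :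
    ‖gradInner L L'‖ ≤ Fintype.card ι * (‖L‖ * ‖L'‖) := by
  have hcoord (L : EuclideanSpace ℝ ι →L[ℝ] ℂ) (i : ι) :
      ‖L (EuclideanSpace.single i 1)‖ ≤ ‖L‖ := by
    simpa using L.le_opNorm (EuclideanSpace.single i 1)
  refine (norm_sum_le_of_le _ fun i _ ↦ ?_).trans_eq
    (by rw [Finset.sum_const, Finset.card_univ, nsmul_eq_mul])
  rw [norm_mul, RCLike.norm_conj]
  exact mul_le_mul (hcoord L i) (hcoord L' i) (norm_nonneg _) (norm_nonneg _)

theorem gradInner_add_right (L L₁ L₂ : EuclideanSpace ℝ ι →L[ℝ] ℂ) :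
    gradInner L (L₁ + L₂) = gradInner L L₁ + gradInner L L₂ := by
  simp [gradInner, mul_add, Finset.sum_add_distrib]

theorem gradInner_smul_right (c : ℝ) (L L' : EuclideanSpace ℝ ι →L[ℝ] ℂ) :
    gradInner L (c • L') = c * gradInner L L' := by
  simp [gradInner, Finset.mul_sum, mul_left_comm]

theorem gradInner_smulRight (L : EuclideanSpace ℝ ι →L[ℝ] ℂ) (u : EuclideanSpace ℝ ι) (z : ℂ) :
    gradInner L ((innerSL ℝ u).smulRight z) = L u * starRingEnd ℂ z := by
  conv_rhs => rw [← sum_smul_single u]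
  simp [gradInner, Finset.sum_mul, EuclideanSpace.inner_single_right, mul_left_comm, mul_assoc]

end GradInner

section WeightedInner

variable {E : Type*} [NormedAddCommGroup E] [InnerProductSpace ℝ E] [FiniteDimensional ℝ E]
  [MeasurableSpace E] [BorelSpace E] {k k' : E → ℝ} {ψ φ : E → ℂ}

/-- The sesquilinear form `∫ k ψ conj(φ)` with real weight `k`. -/
def weightedInner (k : E → ℝ) (ψ φ : E → ℂ) : ℂ :=
  ∫ v, (k v : ℂ) * (ψ v * starRingEnd ℂ (φ v))

theorem weightedInner_smul_self (k χ : E → ℝ) (ψ : E → ℂ) :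
    weightedInner k ψ (fun v ↦ χ v • ψ v) = (weightedMass (fun v ↦ k v * χ v) ψ : ℂ) := by
  rw [weightedMass, ← integral_complex_ofReal]
  refine integral_congr_ae (.of_forall fun v ↦ ?_)
  simp only [Complex.real_smul, map_mul, Complex.conj_ofReal, Complex.ofReal_mul,
    Complex.ofReal_pow, ← Complex.mul_conj']
  ring

theorem weightedInner_self (k : E → ℝ) (ψ : E → ℂ) :
    weightedInner k ψ ψ = (weightedMass k ψ : ℂ) := by
  simpa using weightedInner_smul_self k 1 ψ

theorem weightedInner_smul_right (k : E → ℝ) (c : ℝ) (ψ φ : E → ℂ) :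
    weightedInner k ψ (c • φ) = c * weightedInner k ψ φ := by
  rw [weightedInner, weightedInner, ← integral_const_mul]
  refine integral_congr_ae (.of_forall fun v ↦ ?_)
  simp only [Pi.smul_apply, Complex.real_smul, map_mul, Complex.conj_ofReal]
  ring

theorem norm_weightedInner_le (hk : Continuous k) (hψ : Continuous ψ)
    (hψc : HasCompactSupport ψ) (hφ : Continuous φ) (hφc : HasCompactSupport φ) :
    ‖weightedInner k ψ φ‖ ≤ weightedMass (|k ·|) ψ + weightedMass (|k ·|) φ := by
  have hiψ := integrable_mul_norm_sq hk.abs hψ hψc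
  have hiφ := integrable_mul_norm_sq hk.abs hφ hφc
  rw [weightedMass, weightedMass, ← integral_add hiψ hiφ]
  refine norm_integral_le_of_norm_le (hiψ.add hiφ) (.of_forall fun v ↦ ?_)
  rw [norm_mul, norm_mul, RCLike.norm_conj, Complex.norm_real, norm_eq_abs, ← mul_add]
  gcongr
  nlinarith [sq_nonneg (‖ψ v‖ - ‖φ v‖), sq_nonneg (‖ψ v‖ + ‖φ v‖)]

theorem abs_weightedMass_le (hk : Continuous k) (hψ : Continuous ψ) (hc : HasCompactSupport ψ)
    (h : ∀ v, |k' v| ≤ k v) : |weightedMass k' ψ| ≤ weightedMass k ψ := by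
  rw [← norm_eq_abs, weightedMass]
  refine norm_integral_le_of_norm_le (integrable_mul_norm_sq hk hψ hc) (.of_forall fun v ↦ ?_)
  rw [norm_mul, norm_pow, norm_norm, norm_eq_abs]
  exact mul_le_mul_of_nonneg_right (h v) (sq_nonneg _)

end WeightedInner

section DirichletForm

variable {ι : Type*} [Fintype ι] [DecidableEq ι] {M : EuclideanSpace ℝ ι → ℝ}
  {ψ φ : EuclideanSpace ℝ ι → ℂ}

/-- The sesquilinear form `∫ ∇(ψ/M) · conj(∇(φ/M)) M²`. -/
def dirichletForm (M : EuclideanSpace ℝ ι → ℝ) (ψ φ : EuclideanSpace ℝ ι → ℂ) : ℂ :=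
  ∫ v, gradInner (fderiv ℝ (fun w ↦ ψ w / (M w : ℂ)) v) (fderiv ℝ (fun w ↦ φ w / (M w : ℂ)) v) *
    (M v : ℂ) ^ 2

theorem integrable_dirichletForm (hM : ContDiff ℝ 1 M) (hM₀ : ∀ v, M v ≠ 0)
    (hψ : ContDiff ℝ 1 ψ) (hc : HasCompactSupport ψ) (hφ : ContDiff ℝ 1 φ) :
    Integrable fun v ↦ gradInner (fderiv ℝ (fun w ↦ ψ w / (M w : ℂ)) v)
      (fderiv ℝ (fun w ↦ φ w / (M w : ℂ)) v) * (M v : ℂ) ^ 2 := by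
  have hDψ := (contDiff_div_ofReal hM hM₀ hψ).continuous_fderiv one_ne_zero
  have hDφ := (contDiff_div_ofReal hM hM₀ hφ).continuous_fderiv one_ne_zero
  have := hM.continuous
  refine Continuous.integrable_of_hasCompactSupport (by unfold gradInner; fun_prop)
    (((hasCompactSupport_div_ofReal (M := M) hc).fderiv ℝ).mono fun v hv h ↦ hv ?_)
  simp [h, gradInner]

theorem dirichletForm_smul_right (c : ℝ) :
    dirichletForm M ψ (c • φ) = c * dirichletForm M ψ φ := by
  simp only [dirichletForm, fderiv_smul_div_ofReal, gradInner_smul_right, mul_assoc,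
    integral_const_mul]

theorem norm_dirichletForm_le (hM : ContDiff ℝ 1 M) (hM₀ : ∀ v, M v ≠ 0)
    (hψ : ContDiff ℝ 1 ψ) (hψc : HasCompactSupport ψ)
    (hφ : ContDiff ℝ 1 φ) (hφc : HasCompactSupport φ) :
    ‖dirichletForm M ψ φ‖ ≤ Fintype.card ι * (dirichletEnergy M ψ + dirichletEnergy M φ) := by
  have hiψ := integrable_dirichletEnergy hM hM₀ hψ hψc
  have hiφ := integrable_dirichletEnergy hM hM₀ hφ hφc
  rw [dirichletEnergy, dirichletEnergy, ← integral_add hiψ hiφ, ← integral_const_mul]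
  refine norm_integral_le_of_norm_le ((hiψ.add hiφ).const_mul _) (.of_forall fun v ↦ ?_)
  rw [norm_mul, norm_pow, Complex.norm_real, norm_eq_abs, sq_abs, ← add_mul, ← mul_assoc]
  gcongr
  refine (norm_gradInner_le _ _).trans ?_
  gcongr
  set x := ‖fderiv ℝ (fun w ↦ ψ w / (M w : ℂ)) v‖
  set y := ‖fderiv ℝ (fun w ↦ φ w / (M w : ℂ)) v‖
  nlinarith [sq_nonneg (x - y), sq_nonneg (x + y)]

theorem dirichletEnergy_le_re_dirichletForm_self (hM : ContDiff ℝ 1 M) (hM₀ : ∀ v, M v ≠ 0)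
    (hψ : ContDiff ℝ 1 ψ) (hc : HasCompactSupport ψ) :
    dirichletEnergy M ψ ≤ (dirichletForm M ψ ψ).re := by
  have hi := integrable_dirichletForm hM hM₀ hψ hc hψ
  calc dirichletEnergy M ψ ≤ ∫ v, (gradInner (fderiv ℝ (fun w ↦ ψ w / (M w : ℂ)) v)
        (fderiv ℝ (fun w ↦ ψ w / (M w : ℂ)) v) * (M v : ℂ) ^ 2).re := by
        refine integral_mono (integrable_dirichletEnergy hM hM₀ hψ hc) hi.re fun v ↦ ?_
        simp only [← Complex.ofReal_pow, Complex.re_mul_ofReal]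
        exact mul_le_mul_of_nonneg_right (norm_sq_le_re_gradInner_self _) (sq_nonneg _)
    _ = (dirichletForm M ψ ψ).re := integral_re hi

end DirichletForm

section SoftSignTest

variable {E : Type*} [NormedAddCommGroup E] [InnerProductSpace ℝ E] {M : E → ℝ} {ψ : E → ℂ}

/-- The test function `softSign ⟪u, ·⟫ • ψ`, for which the transport term of the form becomes the
nonnegative quantity `⟪u, v⟫ softSign ⟪u, v⟫ |ψ|²`. -/
def softSignSMul (u : E) (ψ : E → ℂ) : E → ℂ := fun v ↦ softSign (inner ℝ u v) • ψ v

theorem contDiff_softSignSMul (u : E) {n : WithTop ℕ∞} (hψ : ContDiff ℝ n ψ) :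
    ContDiff ℝ n (softSignSMul u ψ) :=
  (contDiff_softSign_inner u).smul hψ

theorem hasCompactSupport_softSignSMul (u : E) (hc : HasCompactSupport ψ) :
    HasCompactSupport (softSignSMul u ψ) :=
  hc.smul_left (f := fun v ↦ softSign (inner ℝ u v))

theorem norm_softSignSMul_le (u : E) (ψ : E → ℂ) (v : E) : ‖softSignSMul u ψ v‖ ≤ ‖ψ v‖ := by
  rw [softSignSMul, norm_smul, norm_eq_abs]
  exact mul_le_of_le_one_left (norm_nonneg _) (abs_softSign_le_one _)

theorem weightedInner_softSignSMul_self [FiniteDimensional ℝ E] [MeasurableSpace E]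
    [BorelSpace E] (k : E → ℝ) (u : E) (ψ : E → ℂ) :
    weightedInner k ψ (softSignSMul u ψ) =
      (weightedMass (fun v ↦ k v * softSign (inner ℝ u v)) ψ : ℂ) :=
  weightedInner_smul_self k _ ψ

theorem hasFDerivAt_softSign_inner (u v : E) :
    HasFDerivAt (fun w ↦ softSign (inner ℝ u w)) (deriv softSign (inner ℝ u v) • innerSL ℝ u) v :=
  (hasDerivAt_softSign _).differentiableAt.hasDerivAt.comp_hasFDerivAt v
    (innerSL ℝ u).hasFDerivAt

theorem fderiv_softSignSMul_div_ofReal (hM : ContDiff ℝ 1 M) (hM₀ : ∀ v, M v ≠ 0)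
    (hψ : ContDiff ℝ 1 ψ) (u v : E) :
    fderiv ℝ (fun w ↦ softSignSMul u ψ w / (M w : ℂ)) v =
      softSign (inner ℝ u v) • fderiv ℝ (fun w ↦ ψ w / (M w : ℂ)) v +
        deriv softSign (inner ℝ u v) • (innerSL ℝ u).smulRight (ψ v / (M v : ℂ)) := by
  have hg := ((contDiff_div_ofReal hM hM₀ hψ).differentiable one_ne_zero v).hasFDerivAt
  simp only [softSignSMul, smul_div_assoc]
  rw [((hasFDerivAt_softSign_inner u v).fun_smul hg).fderiv]
  ext e
  simp [mul_assoc]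

theorem norm_fderiv_softSignSMul_div_ofReal_le (hM : ContDiff ℝ 1 M) (hM₀ : ∀ v, M v ≠ 0)
    (hψ : ContDiff ℝ 1 ψ) (u v : E) :
    ‖fderiv ℝ (fun w ↦ softSignSMul u ψ w / (M w : ℂ)) v‖ ≤
      ‖fderiv ℝ (fun w ↦ ψ w / (M w : ℂ)) v‖ + ‖u‖ * ‖ψ v / (M v : ℂ)‖ := by
  rw [fderiv_softSignSMul_div_ofReal hM hM₀ hψ]
  refine norm_add_le_of_le ?_ ?_
  · rw [norm_smul, norm_eq_abs]
    exact mul_le_of_le_one_left (norm_nonneg _) (abs_softSign_le_one _)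
  · rw [norm_smul, norm_eq_abs, ContinuousLinearMap.norm_smulRight_apply, innerSL_apply_norm]
    exact mul_le_of_le_one_left (by positivity) (abs_deriv_softSign_le_one _)

theorem dirichletEnergy_softSignSMul_le [FiniteDimensional ℝ E] [MeasurableSpace E]
    [BorelSpace E] (hM : ContDiff ℝ 1 M) (hM₀ : ∀ v, M v ≠ 0) (hψ : ContDiff ℝ 1 ψ)
    (hc : HasCompactSupport ψ) (u : E) :
    dirichletEnergy M (softSignSMul u ψ) ≤
      2 * dirichletEnergy M ψ + 2 * (‖u‖ ^ 2 * weightedMass 1 ψ) := by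
  have hiE := (integrable_dirichletEnergy hM hM₀ hψ hc).const_mul 2
  have hiN := (integrable_mul_norm_sq continuous_one hψ.continuous hc).const_mul (2 * ‖u‖ ^ 2)
  rw [dirichletEnergy, dirichletEnergy, weightedMass, ← mul_assoc, ← integral_const_mul,
    ← integral_const_mul, ← integral_add hiE hiN]
  refine integral_mono (integrable_dirichletEnergy hM hM₀ (contDiff_softSignSMul u hψ)
    (hasCompactSupport_softSignSMul u hc)) (hiE.add hiN) fun v ↦ ?_
  have hD := norm_fderiv_softSignSMul_div_ofReal_le hM hM₀ hψ u v
  simp only [Pi.one_apply, norm_sq_eq_sq_mul_norm_div_sq hM₀ v]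
  set x := ‖fderiv ℝ (fun w ↦ ψ w / (M w : ℂ)) v‖
  set y := ‖ψ v / (M v : ℂ)‖
  calc ‖fderiv ℝ (fun w ↦ softSignSMul u ψ w / (M w : ℂ)) v‖ ^ 2 * M v ^ 2
      ≤ (x + ‖u‖ * y) ^ 2 * M v ^ 2 := by gcongr
    _ ≤ 2 * (x ^ 2 + (‖u‖ * y) ^ 2) * M v ^ 2 := by gcongr; exact add_sq_le
    _ = 2 * (x ^ 2 * M v ^ 2) + 2 * ‖u‖ ^ 2 * (1 * (M v ^ 2 * y ^ 2)) := by ring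

-- `softSign ⟪u, ·⟫ • ∇(ψ/M)` pairs with `∇(ψ/M)` to a real number: only the derivative of the
-- multiplier contributes to the imaginary part.
theorem im_gradInner_fderiv_softSignSMul {ι : Type*} [Fintype ι] [DecidableEq ι]
    {M : EuclideanSpace ℝ ι → ℝ} {ψ : EuclideanSpace ℝ ι → ℂ} (hM : ContDiff ℝ 1 M)
    (hM₀ : ∀ v, M v ≠ 0) (hψ : ContDiff ℝ 1 ψ) (u v : EuclideanSpace ℝ ι) :
    (gradInner (fderiv ℝ (fun w ↦ ψ w / (M w : ℂ)) v)
      (fderiv ℝ (fun w ↦ softSignSMul u ψ w / (M w : ℂ)) v)).im =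
      deriv softSign (inner ℝ u v) *
        (fderiv ℝ (fun w ↦ ψ w / (M w : ℂ)) v u * starRingEnd ℂ (ψ v / (M v : ℂ))).im := by
  rw [fderiv_softSignSMul_div_ofReal hM hM₀ hψ, gradInner_add_right, gradInner_smul_right,
    gradInner_smul_right, gradInner_smulRight, gradInner_self, Complex.add_im,
    ← Complex.ofReal_mul, Complex.ofReal_im, zero_add, Complex.im_ofReal_mul]

theorem abs_im_dirichletForm_softSignSMul_le {ι : Type*} [Fintype ι] [DecidableEq ι]
    {M : EuclideanSpace ℝ ι → ℝ} {ψ : EuclideanSpace ℝ ι → ℂ} (hM : ContDiff ℝ 1 M)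
    (hM₀ : ∀ v, M v ≠ 0) (hψ : ContDiff ℝ 1 ψ) (hc : HasCompactSupport ψ)
    (u : EuclideanSpace ℝ ι) {c : ℝ} (hc₀ : 0 < c) :
    |(dirichletForm M ψ (softSignSMul u ψ)).im| ≤
      c * dirichletEnergy M ψ + 1 / (4 * c) * (‖u‖ ^ 2 * weightedMass 1 ψ) := by
  have hi := integrable_dirichletForm hM hM₀ hψ hc (contDiff_softSignSMul u hψ)
  have hiE := (integrable_dirichletEnergy hM hM₀ hψ hc).const_mul c
  have hiN := (integrable_mul_norm_sq continuous_one hψ.continuous hc).const_mul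
    (1 / (4 * c) * ‖u‖ ^ 2)
  have him : (dirichletForm M ψ (softSignSMul u ψ)).im = _ := (integral_im hi).symm
  rw [him, dirichletEnergy, weightedMass, ← mul_assoc, ← integral_const_mul,
    ← integral_const_mul, ← integral_add hiE hiN, ← norm_eq_abs]
  refine norm_integral_le_of_norm_le (hiE.add hiN) (.of_forall fun v ↦ ?_)
  simp only [RCLike.im_to_complex, ← Complex.ofReal_pow, Complex.im_mul_ofReal, Pi.one_apply,
    im_gradInner_fderiv_softSignSMul hM hM₀ hψ, norm_sq_eq_sq_mul_norm_div_sq hM₀ v]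
  set L := fderiv ℝ (fun w ↦ ψ w / (M w : ℂ)) v
  set y := ψ v / (M v : ℂ)
  have hpair : |(L u * starRingEnd ℂ y).im| ≤ ‖L‖ * ‖u‖ * ‖y‖ := by
    refine (Complex.abs_im_le_norm _).trans ?_
    rw [norm_mul, RCLike.norm_conj]
    gcongr
    exact L.le_opNorm u
  have hyoung : ‖L‖ * ‖u‖ * ‖y‖ ≤ c * ‖L‖ ^ 2 + 1 / (4 * c) * ‖u‖ ^ 2 * ‖y‖ ^ 2 := by
    convert two_mul_mul_le_sq_div_add_mul_sq hc₀ (‖u‖ * ‖y‖ / 2) ‖L‖ using 1 <;> field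
  calc ‖deriv softSign (inner ℝ u v) * (L u * starRingEnd ℂ y).im * M v ^ 2‖
      = |deriv softSign (inner ℝ u v)| * |(L u * starRingEnd ℂ y).im| * M v ^ 2 := by
        rw [norm_eq_abs, abs_mul, abs_mul, abs_sq]
    _ ≤ 1 * (‖L‖ * ‖u‖ * ‖y‖) * M v ^ 2 := by
        gcongr
        exact abs_deriv_softSign_le_one _
    _ ≤ (c * ‖L‖ ^ 2 + 1 / (4 * c) * ‖u‖ ^ 2 * ‖y‖ ^ 2) * M v ^ 2 := by
        rw [one_mul]
        gcongr
    _ = c * (‖L‖ ^ 2 * M v ^ 2) + 1 / (4 * c) * ‖u‖ ^ 2 * (1 * (M v ^ 2 * ‖y‖ ^ 2)) := by ring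

end SoftSignTest

section KineticForm

variable {E : Type*} [NormedAddCommGroup E] [InnerProductSpace ℝ E] [FiniteDimensional ℝ E]
  [MeasurableSpace E] [BorelSpace E] {M : E → ℝ} {u : E} {K : ℝ} {ψ : E → ℂ}

/-- The squared norm `‖ψ‖²_{H_η}`, where the vector `u = η^{1/3} e₁` encodes both the parameter and
the direction of transport: `η v₁ = ‖u‖² ⟪u, v⟫`. -/
def kineticNormSq (M : E → ℝ) (u : E) (ψ : E → ℂ) : ℝ :=
  dirichletEnergy M ψ + weightedMass (fun v ↦ (1 + ‖v‖ ^ 2)⁻¹) ψ +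
    ‖u‖ ^ 2 * weightedMass (fun v ↦ |inner ℝ u v|) ψ

/-- The Hardy-type bound of the `⟨v⟩⁻²`-mass by the energy and the potential `V`. -/
def HardyBound (M V : E → ℝ) (K : ℝ) : Prop :=
  ∀ ψ : E → ℂ, ContDiff ℝ 1 ψ → HasCompactSupport ψ →
    weightedMass (fun v ↦ (1 + ‖v‖ ^ 2)⁻¹) ψ ≤ K * (dirichletEnergy M ψ + weightedMass V ψ)

/-- The bound of the full mass, at the scale `‖u‖²`, by the energy, the `⟨v⟩⁻²`-mass and the
softened transport term, with a constant uniform in `u`. -/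
def LocalizationBound (M : E → ℝ) (K : ℝ) : Prop :=
  ∀ (u : E) (ψ : E → ℂ), ContDiff ℝ 1 ψ → HasCompactSupport ψ →
    ‖u‖ ^ 2 * weightedMass 1 ψ ≤
      K * (dirichletEnergy M ψ + weightedMass (fun v ↦ (1 + ‖v‖ ^ 2)⁻¹) ψ +
        ‖u‖ ^ 2 * weightedMass (fun v ↦ inner ℝ u v * softSign (inner ℝ u v)) ψ)

theorem weightedMass_inv_one_add_norm_sq_nonneg :
    0 ≤ weightedMass (fun v ↦ (1 + ‖v‖ ^ 2)⁻¹) ψ :=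
  weightedMass_nonneg fun _ ↦ by positivity

theorem weightedMass_abs_inner_nonneg : 0 ≤ weightedMass (fun v ↦ |inner ℝ u v|) ψ :=
  weightedMass_nonneg fun _ ↦ abs_nonneg _

theorem kineticNormSq_nonneg : 0 ≤ kineticNormSq M u ψ :=
  add_nonneg (add_nonneg dirichletEnergy_nonneg weightedMass_inv_one_add_norm_sq_nonneg)
    (mul_nonneg (sq_nonneg _) weightedMass_abs_inner_nonneg)

theorem kineticNormSq_smul (c : ℝ) : kineticNormSq M u (c • ψ) = c ^ 2 * kineticNormSq M u ψ := by
  simp only [kineticNormSq, dirichletEnergy_smul, weightedMass_smul]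
  ring

theorem LocalizationBound.norm_sq_mul_weightedMass_le (h : LocalizationBound M K) (hK : 0 ≤ K)
    (hψ : ContDiff ℝ 1 ψ) (hc : HasCompactSupport ψ) :
    ‖u‖ ^ 2 * weightedMass 1 ψ ≤ K * kineticNormSq M u ψ := by
  refine (h u ψ hψ hc).trans (mul_le_mul_of_nonneg_left ?_ hK)
  refine add_le_add_right (mul_le_mul_of_nonneg_left ?_ (sq_nonneg _)) _
  refine weightedMass_mono (continuous_inner_mul_softSign u) (by fun_prop) hψ.continuous hc
    fun v ↦ (le_abs_self _).trans ?_
  rw [abs_mul]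
  exact mul_le_of_le_one_right (abs_nonneg _) (abs_softSign_le_one _)

theorem LocalizationBound.kineticNormSq_softSignSMul_le (h : LocalizationBound M K) (hK : 0 ≤ K)
    (hM : ContDiff ℝ 1 M) (hM₀ : ∀ v, M v ≠ 0) (hψ : ContDiff ℝ 1 ψ) (hc : HasCompactSupport ψ) :
    kineticNormSq M u (softSignSMul u ψ) ≤ (2 + 2 * K) * kineticNormSq M u ψ := by
  have hE := dirichletEnergy_softSignSMul_le hM hM₀ hψ hc u
  have hmass := h.norm_sq_mul_weightedMass_le (u := u) hK hψ hc
  have hH : weightedMass (fun v ↦ (1 + ‖v‖ ^ 2)⁻¹) (softSignSMul u ψ) ≤ _ :=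
    weightedMass_le_of_norm_le continuous_inv_one_add_norm_sq (fun v ↦ by positivity)
      hψ.continuous hc (norm_softSignSMul_le u ψ)
  have hZ : ‖u‖ ^ 2 * weightedMass (fun v ↦ |inner ℝ u v|) (softSignSMul u ψ) ≤ _ :=
    mul_le_mul_of_nonneg_left (weightedMass_le_of_norm_le (by fun_prop) (fun v ↦ abs_nonneg _)
      hψ.continuous hc (norm_softSignSMul_le u ψ)) (sq_nonneg ‖u‖)
  have hH₀ := weightedMass_inv_one_add_norm_sq_nonneg (ψ := ψ)
  have hZ₀ := mul_nonneg (sq_nonneg ‖u‖) (weightedMass_abs_inner_nonneg (u := u) (ψ := ψ))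
  unfold kineticNormSq at *
  linarith

theorem weightedMass_abs_inner_le (hψ : Continuous ψ) (hc : HasCompactSupport ψ) :
    weightedMass (fun v ↦ |inner ℝ u v|) ψ ≤
      weightedMass 1 ψ + weightedMass (fun v ↦ inner ℝ u v * softSign (inner ℝ u v)) ψ := by
  have hk := continuous_inner_mul_softSign u
  rw [← weightedMass_add continuous_one hk hψ hc]
  exact weightedMass_mono (by fun_prop) (continuous_one.add hk) hψ hc
    fun v ↦ abs_le_one_add_mul_softSign _

end KineticForm

section DualNorm

variable {ι : Type*} [Fintype ι] [DecidableEq ι] {M V : EuclideanSpace ℝ ι → ℝ}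
  {u : EuclideanSpace ℝ ι} {l : ℂ} {K K₁ K₂ : ℝ} {ψ φ : EuclideanSpace ℝ ι → ℂ}

/-- The form `a(ψ, φ)` with `η v₁` and `η^{2/3}` written as `‖u‖² ⟪u, v⟫` and `‖u‖²`. -/
def kineticForm (M V : EuclideanSpace ℝ ι → ℝ) (u : EuclideanSpace ℝ ι) (l : ℂ)
    (ψ φ : EuclideanSpace ℝ ι → ℂ) : ℂ :=
  dirichletForm M ψ φ + weightedInner V ψ φ +
    Complex.I * ((‖u‖ ^ 2 : ℝ) * weightedInner (fun v ↦ inner ℝ u v) ψ φ) -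
    l * ((‖u‖ ^ 2 : ℝ) * weightedInner 1 ψ φ)

/-- The norm of `a(ψ, ·)` as a functional: the supremum of `|a(ψ, φ)|` over the test functions `φ`
in the unit ball. -/
def kineticDualNorm (M V : EuclideanSpace ℝ ι → ℝ) (u : EuclideanSpace ℝ ι) (l : ℂ)
    (ψ : EuclideanSpace ℝ ι → ℂ) : ℝ :=
  sSup {r : ℝ | ∃ φ : EuclideanSpace ℝ ι → ℂ, ContDiff ℝ (⊤ : ℕ∞) φ ∧ HasCompactSupport φ ∧
    √(kineticNormSq M u φ) ≤ 1 ∧ r = ‖kineticForm M V u l ψ φ‖}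

theorem kineticForm_smul_right (c : ℝ) :
    kineticForm M V u l ψ (c • φ) = c * kineticForm M V u l ψ φ := by
  simp only [kineticForm, dirichletForm_smul_right, weightedInner_smul_right]
  ring

theorem norm_kineticForm_le (hM : ContDiff ℝ 1 M) (hM₀ : ∀ v, M v ≠ 0) (hV : Continuous V)
    (hV₁ : ∀ v, |V v| ≤ 1) (hψ : ContDiff ℝ 1 ψ) (hψc : HasCompactSupport ψ)
    (hφ : ContDiff ℝ 1 φ) (hφc : HasCompactSupport φ) :
    ‖kineticForm M V u l ψ φ‖ ≤
      Fintype.card ι * (dirichletEnergy M ψ + dirichletEnergy M φ) +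
        (weightedMass 1 ψ + weightedMass 1 φ) +
        ‖u‖ ^ 2 * (weightedMass (fun v ↦ |inner ℝ u v|) ψ +
          weightedMass (fun v ↦ |inner ℝ u v|) φ) +
        ‖l‖ * (‖u‖ ^ 2 * (weightedMass 1 ψ + weightedMass 1 φ)) := by
  have hmass {k : EuclideanSpace ℝ ι → ℝ} (hk : Continuous k) :=
    norm_weightedInner_le hk hψ.continuous hψc hφ.continuous hφc
  have hpot : ‖weightedInner V ψ φ‖ ≤ weightedMass 1 ψ + weightedMass 1 φ :=
    (hmass hV).trans (add_le_add
      (weightedMass_mono hV.abs continuous_one hψ.continuous hψc hV₁)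
      (weightedMass_mono hV.abs continuous_one hφ.continuous hφc hV₁))
  have hone : ‖weightedInner 1 ψ φ‖ ≤ weightedMass 1 ψ + weightedMass 1 φ := by
    simpa using! hmass continuous_one
  refine norm_sub_le_of_le (norm_add_le_of_le (norm_add_le_of_le
    (norm_dirichletForm_le hM hM₀ hψ hψc hφ hφc) hpot) ?_) ?_
  · rw [norm_mul, norm_mul, Complex.norm_I, one_mul, Complex.norm_real, norm_eq_abs, abs_sq]
    gcongr
    exact hmass (by fun_prop)
  · rw [norm_mul, norm_mul, Complex.norm_real, norm_eq_abs, abs_sq]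
    gcongr

theorem LocalizationBound.exists_norm_kineticForm_le (h : LocalizationBound M K) (hK : 0 ≤ K)
    (hM : ContDiff ℝ 1 M) (hM₀ : ∀ v, M v ≠ 0) (hV : Continuous V) (hV₁ : ∀ v, |V v| ≤ 1)
    (hu : u ≠ 0) (l : ℂ) :
    ∃ C, 0 ≤ C ∧ ∀ ψ φ : EuclideanSpace ℝ ι → ℂ, ContDiff ℝ 1 ψ → HasCompactSupport ψ →
      ContDiff ℝ 1 φ → HasCompactSupport φ →
        ‖kineticForm M V u l ψ φ‖ ≤ C * (kineticNormSq M u ψ + kineticNormSq M u φ) := by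
  have hu₀ : 0 < ‖u‖ ^ 2 := by positivity
  have hsplit {ψ : EuclideanSpace ℝ ι → ℂ} : dirichletEnergy M ψ ≤ kineticNormSq M u ψ ∧
      ‖u‖ ^ 2 * weightedMass (fun v ↦ |inner ℝ u v|) ψ ≤ kineticNormSq M u ψ := by
    have hE := dirichletEnergy_nonneg (M := M) (ψ := ψ)
    have hH := weightedMass_inv_one_add_norm_sq_nonneg (ψ := ψ)
    have hZ := mul_nonneg hu₀.le (weightedMass_abs_inner_nonneg (u := u) (ψ := ψ))
    constructor <;> unfold kineticNormSq <;> linarith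
  refine ⟨Fintype.card ι + K / ‖u‖ ^ 2 + 1 + ‖l‖ * K, by positivity, fun ψ φ hψ hψc hφ hφc ↦ ?_⟩
  have hNψ := h.norm_sq_mul_weightedMass_le (u := u) hK hψ hψc
  have hNφ := h.norm_sq_mul_weightedMass_le (u := u) hK hφ hφc
  refine (norm_kineticForm_le hM hM₀ hV hV₁ hψ hψc hφ hφc).trans ?_
  simp only [add_mul]
  refine add_le_add (add_le_add (add_le_add ?_ ?_) ?_) ?_
  · gcongr <;> exact hsplit.1
  · rw [div_mul_eq_mul_div, le_div_iff₀' hu₀]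
    linarith
  · linarith [(hsplit (ψ := ψ)).2, (hsplit (ψ := φ)).2]
  · rw [mul_assoc]
    exact mul_le_mul_of_nonneg_left (by linarith) (norm_nonneg l)

theorem LocalizationBound.bddAbove_norm_kineticForm (h : LocalizationBound M K) (hK : 0 ≤ K)
    (hM : ContDiff ℝ 1 M) (hM₀ : ∀ v, M v ≠ 0) (hV : Continuous V) (hV₁ : ∀ v, |V v| ≤ 1)
    (hu : u ≠ 0) (l : ℂ) (hψ : ContDiff ℝ 1 ψ) (hc : HasCompactSupport ψ) :
    BddAbove {r : ℝ | ∃ φ : EuclideanSpace ℝ ι → ℂ, ContDiff ℝ (⊤ : ℕ∞) φ ∧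
      HasCompactSupport φ ∧ √(kineticNormSq M u φ) ≤ 1 ∧ r = ‖kineticForm M V u l ψ φ‖} := by
  obtain ⟨C, hC, hbound⟩ := h.exists_norm_kineticForm_le hK hM hM₀ hV hV₁ hu l
  refine ⟨C * (kineticNormSq M u ψ + 1), ?_⟩
  rintro _ ⟨φ, hφ, hφc, hφ₁, rfl⟩
  refine (hbound ψ φ hψ hc (hφ.of_le (by simp)) hφc).trans ?_
  gcongr
  exact sqrt_le_one.1 hφ₁

theorem kineticDualNorm_nonneg : 0 ≤ kineticDualNorm M V u l ψ :=
  sSup_nonneg <| by rintro _ ⟨φ, -, -, -, rfl⟩; exact norm_nonneg _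

theorem LocalizationBound.norm_kineticForm_le_mul_kineticDualNorm (h : LocalizationBound M K)
    (hK : 0 ≤ K) (hM : ContDiff ℝ 1 M) (hM₀ : ∀ v, M v ≠ 0) (hV : Continuous V)
    (hV₁ : ∀ v, |V v| ≤ 1) (hu : u ≠ 0) (l : ℂ) (hψ : ContDiff ℝ 1 ψ) (hψc : HasCompactSupport ψ)
    (hφ : ContDiff ℝ (⊤ : ℕ∞) φ) (hφc : HasCompactSupport φ) {m : ℝ} (hm : 0 < m)
    (hφm : kineticNormSq M u φ ≤ m ^ 2) :
    ‖kineticForm M V u l ψ φ‖ ≤ m * kineticDualNorm M V u l ψ := by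
  have hmem : ‖kineticForm M V u l ψ (m⁻¹ • φ)‖ ≤ kineticDualNorm M V u l ψ := by
    refine le_csSup (h.bddAbove_norm_kineticForm hK hM hM₀ hV hV₁ hu l hψ hψc)
      ⟨m⁻¹ • φ, hφ.const_smul m⁻¹, hφc.smul_left (f := fun _ ↦ m⁻¹), ?_, rfl⟩
    rw [kineticNormSq_smul, sqrt_le_one, inv_pow, inv_mul_le_one₀ (by positivity)]
    exact hφm
  rwa [kineticForm_smul_right, norm_mul, Complex.norm_real, norm_inv, norm_eq_abs, abs_of_pos hm,
    inv_mul_le_iff₀ hm] at hmem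

theorem dirichletEnergy_add_weightedMass_le (hM : ContDiff ℝ 1 M) (hM₀ : ∀ v, M v ≠ 0)
    (hψ : ContDiff ℝ 1 ψ) (hc : HasCompactSupport ψ) :
    dirichletEnergy M ψ + weightedMass V ψ ≤
      ‖kineticForm M V u l ψ ψ‖ + ‖l‖ * (‖u‖ ^ 2 * weightedMass 1 ψ) := by
  have hE := dirichletEnergy_le_re_dirichletForm_self hM hM₀ hψ hc
  have hre : (kineticForm M V u l ψ ψ).re = (dirichletForm M ψ ψ).re + weightedMass V ψ -
      l.re * (‖u‖ ^ 2 * weightedMass 1 ψ) := by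
    simp only [kineticForm, weightedInner_self, ← Complex.ofReal_mul, Complex.sub_re,
      Complex.add_re, Complex.re_mul_ofReal, Complex.I_re, Complex.ofReal_re, zero_mul, add_zero]
  have hl : l.re * (‖u‖ ^ 2 * weightedMass 1 ψ) ≤ ‖l‖ * (‖u‖ ^ 2 * weightedMass 1 ψ) :=
    mul_le_mul_of_nonneg_right (Complex.re_le_norm l)
      (mul_nonneg (sq_nonneg _) (weightedMass_nonneg fun _ ↦ zero_le_one))
  linarith [Complex.re_le_norm (kineticForm M V u l ψ ψ)]

theorem norm_sq_mul_weightedMass_inner_mul_softSign_le (hM : ContDiff ℝ 1 M) (hM₀ : ∀ v, M v ≠ 0)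
    (hψ : ContDiff ℝ 1 ψ) (hc : HasCompactSupport ψ) {c : ℝ} (hc₀ : 0 < c) :
    ‖u‖ ^ 2 * weightedMass (fun v ↦ inner ℝ u v * softSign (inner ℝ u v)) ψ ≤
      ‖kineticForm M V u l ψ (softSignSMul u ψ)‖ + c * dirichletEnergy M ψ +
        1 / (4 * c) * (‖u‖ ^ 2 * weightedMass 1 ψ) + ‖l‖ * (‖u‖ ^ 2 * weightedMass 1 ψ) := by
  have hE := neg_le_of_abs_le (abs_im_dirichletForm_softSignSMul_le hM hM₀ hψ hc u hc₀)
  set m := weightedMass (fun v ↦ softSign (inner ℝ u v)) ψ with hm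
  have him : (kineticForm M V u l ψ (softSignSMul u ψ)).im =
      (dirichletForm M ψ (softSignSMul u ψ)).im +
        ‖u‖ ^ 2 * weightedMass (fun v ↦ inner ℝ u v * softSign (inner ℝ u v)) ψ -
        l.im * (‖u‖ ^ 2 * m) := by
    simp only [kineticForm, weightedInner_softSignSMul_self, ← Complex.ofReal_mul, Complex.sub_im,
      Complex.add_im, Complex.im_mul_ofReal, Complex.I_im, Complex.ofReal_im, one_mul, add_zero,
      Pi.one_apply, hm]
  have hl : l.im * (‖u‖ ^ 2 * m) ≤ ‖l‖ * (‖u‖ ^ 2 * weightedMass 1 ψ) := by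
    refine (le_abs_self _).trans ?_
    rw [abs_mul, abs_mul, abs_sq]
    gcongr
    · exact Complex.abs_im_le_norm l
    · exact abs_weightedMass_le continuous_one hψ.continuous hc fun v ↦ abs_softSign_le_one _
  linarith [(le_abs_self _).trans
    (Complex.abs_im_le_norm (kineticForm M V u l ψ (softSignSMul u ψ)))]

end DualNorm

section Coercivity

theorem le_of_localization_and_transport {E W H N B a K₁ K₂ l : ℝ} (hW : 0 ≤ W) (hN : 0 ≤ N)
    (hK₂ : 0 < K₂) (hH : H ≤ K₁ * (E + W)) (hNB : N ≤ K₂ * (E + H + B))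
    (hB : B ≤ a + K₂ * E + 1 / (4 * K₂) * N + l * N) (hl : l ≤ 1 / (4 * K₂)) :
    B ≤ 2 * a + (1 + K₁ + 2 * K₂) * (E + W) ∧
      N ≤ 2 * K₂ * a + 2 * K₂ * (1 + K₁ + K₂) * (E + W) := by
  have hlN : l * N ≤ 1 / (4 * K₂) * N := mul_le_mul_of_nonneg_right hl hN
  have hquarter : 1 / (4 * K₂) * N ≤ (E + H + B) / 4 := by
    rw [one_div_mul_eq_div, div_le_iff₀ (by positivity)]
    linarith
  have hKW : 0 ≤ K₂ * W := by positivity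
  have hB' : B ≤ 2 * a + (1 + K₁ + 2 * K₂) * (E + W) := by linarith
  refine ⟨hB', ?_⟩
  calc N ≤ K₂ * (E + H + B) := hNB
    _ ≤ K₂ * (2 * a + 2 * (1 + K₁ + K₂) * (E + W)) :=
      mul_le_mul_of_nonneg_left (by linarith) hK₂.le
    _ = 2 * K₂ * a + 2 * K₂ * (1 + K₁ + K₂) * (E + W) := by ring

theorem add_add_le_of_energy_and_transport {E W H N B Z a₁ a₂ K₁ K₂ l : ℝ}
    (hW : 0 ≤ W) (hN : 0 ≤ N) (ha₂ : 0 ≤ a₂) (hK₁ : 0 < K₁) (hK₂ : 0 < K₂)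
    (hH : H ≤ K₁ * (E + W)) (hNB : N ≤ K₂ * (E + H + B)) (hZ : Z ≤ N + B)
    (hEW : E + W ≤ a₁ + l * N) (hB : B ≤ a₂ + K₂ * E + 1 / (4 * K₂) * N + l * N)
    (hl : l ≤ 1 / (4 * K₂ * (1 + K₁ + K₂))) :
    E + H + Z ≤ 4 * (1 + K₂) * (1 + K₁ + K₂) * (a₁ + a₂) := by
  set P := 1 + K₁ + K₂
  have hP₁ : 1 ≤ P := by linarith
  have : 0 < P := by linarith
  obtain ⟨hB', hN'⟩ := le_of_localization_and_transport hW hN hK₂ hH hNB hB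
    (hl.trans (one_div_le_one_div_of_le (by positivity)
      (le_mul_of_one_le_right (by positivity) hP₁)))
  have hlN : l * N ≤ a₂ / 2 + (E + W) / 2 := by
    calc l * N ≤ 1 / (4 * K₂ * P) * N := mul_le_mul_of_nonneg_right hl hN
      _ ≤ 1 / (4 * K₂ * P) * (2 * K₂ * (P * a₂) + 2 * K₂ * P * (E + W)) := by
        gcongr
        refine hN'.trans ?_
        gcongr
        exact le_mul_of_one_le_left ha₂ hP₁
      _ = a₂ / 2 + (E + W) / 2 := by
        field_simp
        ring
  have hEW' : E + W ≤ 2 * a₁ + a₂ := by linarith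
  calc E + H + Z ≤ 2 * (1 + K₂) * (P * (E + W) + a₂) := by linarith
    _ ≤ 2 * (1 + K₂) * (P * (2 * a₁ + a₂) + P * a₂) := by
      gcongr
      exact le_mul_of_one_le_left ha₂ hP₁
    _ = 4 * (1 + K₂) * P * (a₁ + a₂) := by ring

variable {ι : Type*} [Fintype ι] [DecidableEq ι] {M V : EuclideanSpace ℝ ι → ℝ}
  {u : EuclideanSpace ℝ ι} {l : ℂ} {K₁ K₂ : ℝ} {ψ : EuclideanSpace ℝ ι → ℂ}

theorem kineticNormSq_le (hK₁ : 0 < K₁) (hK₂ : 0 < K₂) (hH : HardyBound M V K₁)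
    (hL : LocalizationBound M K₂) (hM : ContDiff ℝ 1 M) (hM₀ : ∀ v, M v ≠ 0)
    (hV₀ : ∀ v, 0 ≤ V v) (hl : ‖l‖ ≤ 1 / (4 * K₂ * (1 + K₁ + K₂)))
    (hψ : ContDiff ℝ 1 ψ) (hc : HasCompactSupport ψ) :
    kineticNormSq M u ψ ≤ 4 * (1 + K₂) * (1 + K₁ + K₂) *
      (‖kineticForm M V u l ψ ψ‖ + ‖kineticForm M V u l ψ (softSignSMul u ψ)‖) := by
  have hZ := mul_le_mul_of_nonneg_left
    (weightedMass_abs_inner_le (u := u) hψ.continuous hc) (sq_nonneg ‖u‖)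
  rw [mul_add] at hZ
  exact add_add_le_of_energy_and_transport (weightedMass_nonneg hV₀)
    (mul_nonneg (sq_nonneg _) (weightedMass_nonneg fun _ ↦ zero_le_one)) (norm_nonneg _)
    hK₁ hK₂ (hH ψ hψ hc) (hL u ψ hψ hc) hZ
    (dirichletEnergy_add_weightedMass_le hM hM₀ hψ hc)
    (norm_sq_mul_weightedMass_inner_mul_softSign_le hM hM₀ hψ hc hK₂) hl

theorem sqrt_kineticNormSq_le_mul_kineticDualNorm (hK₁ : 0 < K₁) (hK₂ : 0 < K₂)
    (hH : HardyBound M V K₁) (hL : LocalizationBound M K₂) (hM : ContDiff ℝ 1 M)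
    (hM₀ : ∀ v, M v ≠ 0) (hV : Continuous V) (hV₀ : ∀ v, 0 ≤ V v) (hV₁ : ∀ v, V v ≤ 1)
    (hu : u ≠ 0) (hl : ‖l‖ ≤ 1 / (4 * K₂ * (1 + K₁ + K₂)))
    (hψ : ContDiff ℝ (⊤ : ℕ∞) ψ) (hc : HasCompactSupport ψ) :
    √(kineticNormSq M u ψ) ≤ 4 * (1 + K₂) * (1 + K₁ + K₂) * (1 + √(2 + 2 * K₂)) *
      kineticDualNorm M V u l ψ := by
  have hψ₁ : ContDiff ℝ 1 ψ := hψ.of_le (by simp)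
  have hD : 0 ≤ kineticDualNorm M V u l ψ := kineticDualNorm_nonneg
  have hdual {φ : EuclideanSpace ℝ ι → ℂ} (hφ : ContDiff ℝ (⊤ : ℕ∞) φ)
      (hφc : HasCompactSupport φ) {m : ℝ} (hm : 0 < m) (hφm : kineticNormSq M u φ ≤ m ^ 2) :
      ‖kineticForm M V u l ψ φ‖ ≤ m * kineticDualNorm M V u l ψ :=
    hL.norm_kineticForm_le_mul_kineticDualNorm hK₂.le hM hM₀ hV
      (fun v ↦ (abs_of_nonneg (hV₀ v)).trans_le (hV₁ v)) hu l hψ₁ hc hφ hφc hm hφm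
  set X := √(kineticNormSq M u ψ)
  have hX : kineticNormSq M u ψ = X ^ 2 := (sq_sqrt kineticNormSq_nonneg).symm
  rcases (sqrt_nonneg (kineticNormSq M u ψ)).eq_or_lt' with hX₀ | hX₀
  · exact hX₀.trans_le (by positivity)
  have hself := hdual hψ hc hX₀ hX.le
  have htest : ‖kineticForm M V u l ψ (softSignSMul u ψ)‖ ≤
      √(2 + 2 * K₂) * X * kineticDualNorm M V u l ψ := by
    refine hdual (contDiff_softSignSMul u hψ) (hasCompactSupport_softSignSMul u hc)
      (by positivity) ?_
    rw [mul_pow, sq_sqrt (by positivity), ← hX]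
    exact hL.kineticNormSq_softSignSMul_le hK₂.le hM hM₀ hψ₁ hc
  refine le_of_mul_le_mul_left ?_ hX₀
  calc X * X = kineticNormSq M u ψ := by rw [hX, sq]
    _ ≤ 4 * (1 + K₂) * (1 + K₁ + K₂) * (X * kineticDualNorm M V u l ψ +
          √(2 + 2 * K₂) * X * kineticDualNorm M V u l ψ) :=
      (kineticNormSq_le hK₁ hK₂ hH hL hM hM₀ hV₀ hl hψ₁ hc).trans (by gcongr)
    _ = _ := by ring

end Coercivity

section PowerWeight

variable {E : Type*} [NormedAddCommGroup E] {M : E → ℝ} {γ C₁ C₂ : ℝ}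

theorem sq_sqrt_one_add_norm_sq_rpow (p : ℝ) (v : E) :
    (√(1 + ‖v‖ ^ 2) ^ p) ^ 2 = (1 + ‖v‖ ^ 2) ^ p := by
  rw [← rpow_div_two_eq_sqrt _ (by positivity), ← rpow_natCast, ← rpow_mul (by positivity)]
  norm_num

theorem sqrt_one_add_norm_sq_rpow_neg_le_one {σ : ℝ} (hσ : 0 ≤ σ) (v : E) :
    √(1 + ‖v‖ ^ 2) ^ (-σ) ≤ 1 :=
  rpow_le_one_of_one_le_of_nonpos (one_le_sqrt_one_add_sq _) (by linarith)

section Bounds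

variable (hC₁ : 0 < C₁)
  (hA : ∀ v, C₁ * √(1 + ‖v‖ ^ 2) ^ (-γ) ≤ M v ∧ M v ≤ C₂ * √(1 + ‖v‖ ^ 2) ^ (-γ))

include hC₁ hA

theorem pos_of_rpow_bounds (v : E) : 0 < M v :=
  lt_of_lt_of_le (by positivity) (hA v).1

theorem pos_const_of_rpow_bounds : 0 < C₂ := by
  have h := (hA 0).1.trans (hA 0).2
  simp only [norm_zero, zero_pow two_ne_zero, add_zero, sqrt_one, one_rpow, mul_one] at h
  exact hC₁.trans_le h

theorem sq_mul_rpow_le_sq_of_rpow_bounds (v : E) : C₁ ^ 2 * (1 + ‖v‖ ^ 2) ^ (-γ) ≤ M v ^ 2 := by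
  rw [← sq_sqrt_one_add_norm_sq_rpow, ← mul_pow]
  exact pow_le_pow_left₀ (by positivity) (hA v).1 2

theorem sq_le_sq_mul_rpow_of_rpow_bounds (v : E) : M v ^ 2 ≤ C₂ ^ 2 * (1 + ‖v‖ ^ 2) ^ (-γ) := by
  rw [← sq_sqrt_one_add_norm_sq_rpow, ← mul_pow]
  exact pow_le_pow_left₀ (pos_of_rpow_bounds hC₁ hA v).le (hA v).2 2

end Bounds

variable [InnerProductSpace ℝ E] [FiniteDimensional ℝ E] [MeasurableSpace E] [BorelSpace E]

theorem weightedMass_le_of_rpow_bounds {k₁ k₂ : E → ℝ} {K : ℝ} {ψ : E → ℂ} (hC₁ : 0 < C₁)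
    (hA : ∀ v, C₁ * √(1 + ‖v‖ ^ 2) ^ (-γ) ≤ M v ∧ M v ≤ C₂ * √(1 + ‖v‖ ^ 2) ^ (-γ))
    (hM : ContDiff ℝ 1 M) (hK : 0 ≤ K) (hk₁ : Continuous k₁) (hk₁₀ : ∀ v, 0 ≤ k₁ v)
    (hk₂ : Continuous k₂) (hk₂₀ : ∀ v, 0 ≤ k₂ v)
    (h : ∀ g : E → ℂ, ContDiff ℝ 1 g → HasCompactSupport g →
      ∫ v, (1 + ‖v‖ ^ 2) ^ (-γ) * (k₁ v * ‖g v‖ ^ 2) ≤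
        K * ∫ v, (1 + ‖v‖ ^ 2) ^ (-γ) * (‖fderiv ℝ g v‖ ^ 2 + k₂ v * ‖g v‖ ^ 2))
    (hψ : ContDiff ℝ 1 ψ) (hc : HasCompactSupport ψ) :
    weightedMass k₁ ψ ≤ C₂ ^ 2 * K / C₁ ^ 2 * (dirichletEnergy M ψ + weightedMass k₂ ψ) :=
  weightedMass_le_of_weighted_inequality (by positivity) (by positivity) hK hM
    (fun v ↦ (pos_of_rpow_bounds hC₁ hA v).ne')
    (contDiff_one_add_norm_sq_rpow (n := 0) (-γ)).continuous
    (sq_mul_rpow_le_sq_of_rpow_bounds hC₁ hA) (sq_le_sq_mul_rpow_of_rpow_bounds hC₁ hA)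
    hk₁ hk₁₀ hk₂ hk₂₀ h hψ hc

theorem exists_hardyBound_of_rpow_bounds {σ : ℝ} (hγ : 2 * (γ + 1) ≠ Module.finrank ℝ E)
    (hσ : 0 ≤ σ) (hC₁ : 0 < C₁) (hM : ContDiff ℝ 1 M)
    (hA : ∀ v, C₁ * √(1 + ‖v‖ ^ 2) ^ (-γ) ≤ M v ∧ M v ≤ C₂ * √(1 + ‖v‖ ^ 2) ^ (-γ)) :
    ∃ K, 0 < K ∧ HardyBound M (fun v ↦ √(1 + ‖v‖ ^ 2) ^ (-σ)) K := by
  have hC₂ := pos_const_of_rpow_bounds hC₁ hA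
  obtain ⟨K, hK, hardy⟩ := exists_hardy_inequality (E := E) (F := ℂ) hγ hσ
  exact ⟨C₂ ^ 2 * K / C₁ ^ 2, by positivity, fun ψ hψ hc ↦
    weightedMass_le_of_rpow_bounds hC₁ hA hM hK.le continuous_inv_one_add_norm_sq
      (fun v ↦ by positivity) (continuous_sqrt_one_add_norm_sq_rpow _) (fun v ↦ by positivity)
      hardy hψ hc⟩

theorem exists_localizationBound_of_rpow_bounds (hC₁ : 0 < C₁) (hM : ContDiff ℝ 1 M)
    (hA : ∀ v, C₁ * √(1 + ‖v‖ ^ 2) ^ (-γ) ≤ M v ∧ M v ≤ C₂ * √(1 + ‖v‖ ^ 2) ^ (-γ)) :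
    ∃ K, 0 < K ∧ LocalizationBound M K := by
  have hC₂ := pos_const_of_rpow_bounds hC₁ hA
  refine ⟨C₂ ^ 2 * (6 + 4 * |γ|) / C₁ ^ 2, by positivity, fun u ψ hψ hc ↦ ?_⟩
  have htransport : Continuous fun v : E ↦
      ‖u‖ ^ 2 * (inner ℝ u v * softSign (inner ℝ u v)) :=
    continuous_const.mul (continuous_inner_mul_softSign u)
  have hmass := weightedMass_le_of_rpow_bounds (k₁ := fun _ ↦ ‖u‖ ^ 2)
    (k₂ := fun v ↦ (1 + ‖v‖ ^ 2)⁻¹ + ‖u‖ ^ 2 * (inner ℝ u v * softSign (inner ℝ u v)))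
    hC₁ hA hM (by positivity) continuous_const (fun _ ↦ by positivity)
    (continuous_inv_one_add_norm_sq.add htransport)
    (fun v ↦ add_nonneg (by positivity) (mul_nonneg (sq_nonneg _) (mul_softSign_nonneg _)))
    (fun g hg hgc ↦ norm_sq_mul_integral_le_localized γ u hg hgc) hψ hc
  have hone : weightedMass (fun _ : E ↦ ‖u‖ ^ 2) ψ = ‖u‖ ^ 2 * weightedMass 1 ψ := by
    simpa only [Pi.one_apply, mul_one] using weightedMass_const_mul (k := 1) (ψ := ψ) (‖u‖ ^ 2)
  rw [weightedMass_add continuous_inv_one_add_norm_sq htransport hψ.continuous hc,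
    weightedMass_const_mul, hone, ← add_assoc] at hmass
  exact hmass

end PowerWeight
section Specialization

variable {d : ℕ} {h0 : 0 < d} {M : EuclideanSpace ℝ (Fin d) → ℝ}
  {ψ φ : EuclideanSpace ℝ (Fin d) → ℂ}

theorem fderiv_conj_div_ofReal {E : Type*} [NormedAddCommGroup E] [NormedSpace ℝ E] (M : E → ℝ)
    (φ : E → ℂ) (v e : E) :
    fderiv ℝ (fun w ↦ starRingEnd ℂ (φ w) / (M w : ℂ)) v e =
      starRingEnd ℂ (fderiv ℝ (fun w ↦ φ w / (M w : ℂ)) v e) := by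
  have h : (fun w ↦ starRingEnd ℂ (φ w) / (M w : ℂ)) =
      Complex.conjCLE ∘ fun w ↦ φ w / (M w : ℂ) := by
    ext w
    simp
  rw [h, Complex.conjCLE.comp_fderiv]
  rfl

theorem inner_single_left_apply (i : Fin d) (r : ℝ) (v : EuclideanSpace ℝ (Fin d)) :
    inner ℝ (EuclideanSpace.single i r) v = r * v i := by
  simp [EuclideanSpace.inner_single_left]

theorem aForm_pow_three (σ : ℝ) {r : ℝ} (hr : 0 < r) (l : ℂ) :
    aForm h0 M σ (r ^ 3) l ψ φ = kineticForm M (fun v ↦ √(1 + ‖v‖ ^ 2) ^ (-σ))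
      (EuclideanSpace.single ⟨0, h0⟩ r) l ψ φ := by
  have hpow : (r ^ 3) ^ ((2 : ℝ) / 3) = r ^ 2 := by
    rw [← rpow_natCast, ← rpow_mul hr.le]
    norm_num
  have htransport : weightedInner (fun v ↦ inner ℝ (EuclideanSpace.single ⟨0, h0⟩ r) v) ψ φ =
      r * ∫ v, ((v (⟨0, h0⟩ : Fin d) : ℝ) : ℂ) * (ψ v * starRingEnd ℂ (φ v)) := by
    simp only [weightedInner, inner_single_left_apply, Complex.ofReal_mul, mul_assoc,
      integral_const_mul]
  rw [kineticForm, htransport, PiLp.norm_single, norm_eq_abs, sq_abs]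
  simp only [aForm, hpow, fderiv_conj_div_ofReal, dirichletForm, gradInner, weightedInner,
    Pi.one_apply, Complex.ofReal_one, one_mul]
  push_cast
  ring

theorem HnormSq_pow_three {r : ℝ} (hr : 0 < r) :
    HnormSq h0 M (r ^ 3) ψ = kineticNormSq M (EuclideanSpace.single ⟨0, h0⟩ r) ψ := by
  have htransport : weightedMass (fun v ↦ |inner ℝ (EuclideanSpace.single ⟨0, h0⟩ r) v|) ψ =
      r * ∫ v, |v (⟨0, h0⟩ : Fin d)| * ‖ψ v‖ ^ 2 := by
    simp only [weightedMass, inner_single_left_apply, abs_mul, abs_of_pos hr, mul_assoc,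
      integral_const_mul]
  rw [kineticNormSq, htransport, PiLp.norm_single, norm_eq_abs, sq_abs]
  simp only [HnormSq, dirichletEnergy, weightedMass, div_eq_inv_mul]
  ring

end Specialization

theorem aForm_coercive_general (d : ℕ) (h0 : 0 < d) (γ C₁ C₂ σ : ℝ) (hγ : 2 * (γ + 1) ≠ d)
    (hC₁ : 0 < C₁) (hσ : 0 ≤ σ) (M : EuclideanSpace ℝ (Fin d) → ℝ) (hM : ContDiff ℝ 1 M)
    (hA1 : ∀ v, C₁ * √(1 + ‖v‖ ^ 2) ^ (-γ) ≤ M v ∧ M v ≤ C₂ * √(1 + ‖v‖ ^ 2) ^ (-γ)) :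
    ∃ l₀ C : ℝ, 0 < l₀ ∧ 0 < C ∧
      ∀ η : ℝ, 0 < η → ∀ l : ℂ, ‖l‖ ≤ l₀ →
        ∀ ψ : EuclideanSpace ℝ (Fin d) → ℂ,
          ContDiff ℝ (⊤ : ℕ∞) ψ → HasCompactSupport ψ →
          √(HnormSq h0 M η ψ) ≤
            C * sSup {r : ℝ | ∃ φ : EuclideanSpace ℝ (Fin d) → ℂ,
              ContDiff ℝ (⊤ : ℕ∞) φ ∧ HasCompactSupport φ ∧
              √(HnormSq h0 M η φ) ≤ 1 ∧ r = ‖aForm h0 M σ η l ψ φ‖} := by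
  obtain ⟨K₁, hK₁, hardy⟩ := exists_hardyBound_of_rpow_bounds (by simpa using hγ) hσ hC₁ hM hA1
  obtain ⟨K₂, hK₂, localization⟩ := exists_localizationBound_of_rpow_bounds hC₁ hM hA1
  refine ⟨1 / (4 * K₂ * (1 + K₁ + K₂)), 4 * (1 + K₂) * (1 + K₁ + K₂) * (1 + √(2 + 2 * K₂)),
    by positivity, by positivity, fun η hη l hl ψ hψ hc ↦ ?_⟩
  obtain ⟨r, hr, rfl⟩ : ∃ r : ℝ, 0 < r ∧ r ^ 3 = η :=
    ⟨η ^ (3⁻¹ : ℝ), by positivity, by exact_mod_cast rpow_inv_natCast_pow hη.le three_ne_zero⟩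
  simp only [HnormSq_pow_three hr, aForm_pow_three σ hr]
  exact sqrt_kineticNormSq_le_mul_kineticDualNorm hK₁ hK₂ hardy localization hM
    (fun v ↦ (pos_of_rpow_bounds hC₁ hA1 v).ne') (continuous_sqrt_one_add_norm_sq_rpow _)
    (fun v ↦ by positivity) (sqrt_one_add_norm_sq_rpow_neg_le_one hσ)
    (by simpa using hr.ne') hl hψ hc

/-- **Coercivity of the operator representing the form `a`** (Lemma 2.9 of the paper):
`‖ψ‖_{H_η} ≤ C ‖A_{λ,η}ψ‖_{H_η}`, expressed via the supremum of `|a(ψ,φ)|` over the unit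
ball of `H_η`. -/
theorem aForm_coercive (d : ℕ) (h0 : 0 < d) (γ C₁ C₂ σ : ℝ)
    (hγ₁ : (d : ℝ) / 2 < γ) (hγ₂ : γ < ((d : ℝ) + 4) / 2)
    (hC₁ : 0 < C₁) (hC₁₂ : C₁ ≤ C₂) (hσ₁ : 2 < σ) (hσ₂ : σ < 2 * γ - d + 4)
    (M : EuclideanSpace ℝ (Fin d) → ℝ) (hMpos : ∀ v, 0 < M v) (hM : ContDiff ℝ 1 M)
    (hA1 : ∀ v, C₁ * Real.sqrt (1 + ‖v‖ ^ 2) ^ (-γ) ≤ M v ∧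
              M v ≤ C₂ * Real.sqrt (1 + ‖v‖ ^ 2) ^ (-γ))
    (hM2 : Integrable (fun v => (M v) ^ 2)) :
    ∃ l₀ C : ℝ, 0 < l₀ ∧ 0 < C ∧
      ∀ η : ℝ, 0 < η → ∀ l : ℂ, ‖l‖ ≤ l₀ →
        ∀ ψ : EuclideanSpace ℝ (Fin d) → ℂ,
          ContDiff ℝ (⊤ : ℕ∞) ψ → HasCompactSupport ψ →
          Real.sqrt (HnormSq h0 M η ψ) ≤
            C * sSup {r : ℝ | ∃ φ : EuclideanSpace ℝ (Fin d) → ℂ,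
              ContDiff ℝ (⊤ : ℕ∞) φ ∧ HasCompactSupport φ ∧
              Real.sqrt (HnormSq h0 M η φ) ≤ 1 ∧ r = ‖aForm h0 M σ η l ψ φ‖} := by
  exact aForm_coercive_general d h0 γ C₁ C₂ σ (by linarith) hC₁ (by linarith) M hM hA1
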